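/- arXiv:1403.0418 — 10 statements merged into one kernel-verified Lean document; each statement's English description precedes it below -/
import Mathlib

section
/- Let c = (c₁,c₂,c₃) ∈ ℝ³ and t = (t₁,t₂,t₃) ∈ ℝ³. The matrix ρ̃(c,t) is positive semidefinite if and only if the following three conditions hold, where q = (1+t₁+t₂−t₃)(1+t₁−t₂+t₃)(1−t₁+t₂+t₃)(1−t₁−t₂−t₃): (i) ‖c‖⁴ − 2‖c‖²(1 − t₁² − t₂² − t₃²) − 4(t₁²c₁² + t₂²c₂² + t₃²c₃²) + q ≥ 0; (ii) ‖c‖² ≤ 1 − (t₁² + t₂² + t₃²) − 2t₁t₂t₃; (iii) ‖c‖² + t₁² + t₂² + t₃² ≤ 3. -/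
open Matrix Kronecker Polynomial
open scoped ComplexOrder

noncomputable section

/-- The Pauli matrices: `pauli 0 = I₂`, `pauli 1 = σ₁`, `pauli 2 = σ₂`, `pauli 3 = σ₃`. -/
def pauli : Fin 4 → Matrix (Fin 2) (Fin 2) ℂ
  | 0 => !![1, 0; 0, 1]
  | 1 => !![0, 1; 1, 0]
  | 2 => !![0, -Complex.I; Complex.I, 0]
  | 3 => !![1, 0; 0, -1]

/-- Euclidean norm of a vector in ℝ³. -/
def norm3 (v : Fin 3 → ℝ) : ℝ := Real.sqrt (∑ i, v i ^ 2)

/-- The canonical axis-aligned two-qubit operator with steering-ellipsoid centre `c`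
and signed semiaxes `t`:
`ρ̃(c,t) = (1/4)(I₄ + Σᵢ cᵢ (σᵢ⊗σ₀) + Σᵢ tᵢ (σᵢ⊗σᵢ))`. -/
def rhoTilde (c t : Fin 3 → ℝ) : Matrix (Fin 2 × Fin 2) (Fin 2 × Fin 2) ℂ :=
  (1 / 4 : ℂ) • ((1 : Matrix (Fin 2 × Fin 2) (Fin 2 × Fin 2) ℂ)
    + ∑ i : Fin 3, (c i : ℂ) • (pauli i.succ ⊗ₖ pauli 0)
    + ∑ i : Fin 3, (t i : ℂ) • (pauli i.succ ⊗ₖ pauli i.succ))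

theorem rhoTilde_herm (c t : Fin 3 → ℝ) : (rhoTilde c t).IsHermitian := by
  ext ⟨i, j⟩ ⟨k, l⟩
  fin_cases i <;> fin_cases j <;> fin_cases k <;> fin_cases l <;>
    simp [rhoTilde, pauli, Fin.sum_univ_three, Matrix.add_apply, Matrix.smul_apply,
      kroneckerMap_apply] <;> ring

/-- four times the operator, as an explicit matrix -/
def explicitM (c t : Fin 3 → ℝ) : Matrix (Fin 4) (Fin 4) ℂ :=
  !![1 + c 2 + t 2, 0, c 0 - Complex.I * c 1, t 0 - t 1;
     0, 1 + c 2 - t 2, t 0 + t 1, c 0 - Complex.I * c 1;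
     c 0 + Complex.I * c 1, t 0 + t 1, 1 - c 2 - t 2, 0;
     t 0 - t 1, c 0 + Complex.I * c 1, 0, 1 - c 2 + t 2]

theorem rhoTilde_eq (c t : Fin 3 → ℝ) :
    rhoTilde c t = ((1 / 4 : ℂ) • explicitM c t).submatrix (finProdFinEquiv (m := 2) (n := 2))
        (finProdFinEquiv (m := 2) (n := 2)) := by
  ext ⟨i, j⟩ ⟨k, l⟩
  fin_cases i <;> fin_cases j <;> fin_cases k <;> fin_cases l <;>
    simp [rhoTilde, pauli, Fin.sum_univ_three, Matrix.add_apply, Matrix.smul_apply,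
      Matrix.one_apply, kroneckerMap_apply, explicitM, finProdFinEquiv] <;> ring

/-- the second to fourth elementary symmetric functions of the eigenvalues (up to factors) -/
def e4 (c t : Fin 3 → ℝ) : ℝ :=
  (c 0 ^ 2 + c 1 ^ 2 + c 2 ^ 2) ^ 2
    - 2 * (c 0 ^ 2 + c 1 ^ 2 + c 2 ^ 2) * (1 - t 0 ^ 2 - t 1 ^ 2 - t 2 ^ 2)
    - 4 * (t 0 ^ 2 * c 0 ^ 2 + t 1 ^ 2 * c 1 ^ 2 + t 2 ^ 2 * c 2 ^ 2)
    + (1 + t 0 + t 1 - t 2) * (1 + t 0 - t 1 + t 2)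
      * (1 - t 0 + t 1 + t 2) * (1 - t 0 - t 1 - t 2)

theorem det_explicit (c t : Fin 3 → ℝ) (x : ℝ) :
    (Matrix.scalar (Fin 4) (x : ℂ) - explicitM c t).det =
      ((x ^ 4 - 4 * x ^ 3
        + 2 * (3 - (c 0 ^ 2 + c 1 ^ 2 + c 2 ^ 2 + t 0 ^ 2 + t 1 ^ 2 + t 2 ^ 2)) * x ^ 2
        - 4 * (1 - (t 0 ^ 2 + t 1 ^ 2 + t 2 ^ 2) - 2 * (t 0 * t 1 * t 2)
            - (c 0 ^ 2 + c 1 ^ 2 + c 2 ^ 2)) * x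
        + e4 c t : ℝ) : ℂ) := by
  have hM : Matrix.scalar (Fin 4) (x : ℂ) - explicitM c t =
      !![(x:ℂ) - (1 + c 2 + t 2), 0, -((c 0:ℂ) - Complex.I * c 1), -((t 0:ℂ) - t 1);
     0, (x:ℂ) - (1 + c 2 - t 2), -((t 0:ℂ) + t 1), -((c 0:ℂ) - Complex.I * c 1);
     -((c 0:ℂ) + Complex.I * c 1), -((t 0:ℂ) + t 1), (x:ℂ) - (1 - c 2 - t 2), 0;
     -((t 0:ℂ) - t 1), -((c 0:ℂ) + Complex.I * c 1), 0, (x - (1 - c 2 + t 2) : ℂ)] := by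
    ext i j
    fin_cases i <;> fin_cases j <;> simp [explicitM]
  rw [hM]
  simp [Matrix.det_succ_row_zero, Fin.sum_univ_succ, Fin.succAbove, e4]
  have hI : Complex.I ^ 2 = -1 := Complex.I_sq
  have hI3 : Complex.I ^ 3 = -Complex.I := Complex.I_pow_three
  have hI4 : Complex.I ^ 4 = 1 := Complex.I_pow_four
  ring_nf
  simp only [hI, hI3, hI4]
  ring

theorem prod_eig (c t : Fin 3 → ℝ) (x : ℝ) :
    ∏ i, (x - 4 * (rhoTilde_herm c t).eigenvalues i) =
      x ^ 4 - 4 * x ^ 3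
        + 2 * (3 - (c 0 ^ 2 + c 1 ^ 2 + c 2 ^ 2 + t 0 ^ 2 + t 1 ^ 2 + t 2 ^ 2)) * x ^ 2
        - 4 * (1 - (t 0 ^ 2 + t 1 ^ 2 + t 2 ^ 2) - 2 * (t 0 * t 1 * t 2)
            - (c 0 ^ 2 + c 1 ^ 2 + c 2 ^ 2)) * x
        + e4 c t := by
  have h1 := congrArg (Polynomial.eval ((x / 4 : ℝ) : ℂ)) (rhoTilde_herm c t).charpoly_eq
  rw [Matrix.eval_charpoly, Polynomial.eval_prod] at h1
  simp only [Polynomial.eval_sub, Polynomial.eval_X, Polynomial.eval_C] at h1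
  have h2 : Matrix.scalar (Fin 2 × Fin 2) ((x / 4 : ℝ) : ℂ) - rhoTilde c t =
      ((1 / 4 : ℂ) • (Matrix.scalar (Fin 4) (x : ℂ) - explicitM c t)).submatrix
        (finProdFinEquiv (m := 2) (n := 2))
        (finProdFinEquiv (m := 2) (n := 2)) := by
    rw [rhoTilde_eq, smul_sub]
    ext i j
    simp only [Matrix.sub_apply, Matrix.submatrix_apply, Matrix.smul_apply, Matrix.scalar_apply,
      Matrix.diagonal_apply, finProdFinEquiv.injective.eq_iff]
    split_ifs <;> simp <;> ring
  rw [h2, Matrix.det_submatrix_equiv_self, Matrix.det_smul, det_explicit] at h1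
  apply Complex.ofReal_injective
  have h3 : (∏ i, (x - 4 * (rhoTilde_herm c t).eigenvalues i)) =
      4 ^ 4 * ∏ i, (x / 4 - (rhoTilde_herm c t).eigenvalues i) := by
    simp only [Fintype.prod_prod_type, Fin.prod_univ_two]
    ring
  rw [h3, Complex.ofReal_mul, Complex.ofReal_prod]
  simp only [Complex.ofReal_sub] at h1 ⊢
  have h4 := h1.symm
  simp only [Fintype.card_fin] at h4
  erw [h4]
  push_cast
  ring

/-- Physicality conditions for the canonical, aligned two-qubit operator. -/
theorem stmt0 (c t : Fin 3 → ℝ) :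
    (rhoTilde c t).PosSemidef ↔
      ((norm3 c) ^ 4
          - 2 * (norm3 c) ^ 2 * (1 - t 0 ^ 2 - t 1 ^ 2 - t 2 ^ 2)
          - 4 * (t 0 ^ 2 * c 0 ^ 2 + t 1 ^ 2 * c 1 ^ 2 + t 2 ^ 2 * c 2 ^ 2)
          + (1 + t 0 + t 1 - t 2) * (1 + t 0 - t 1 + t 2)
            * (1 - t 0 + t 1 + t 2) * (1 - t 0 - t 1 - t 2) ≥ 0
        ∧ (norm3 c) ^ 2 ≤ 1 - (t 0 ^ 2 + t 1 ^ 2 + t 2 ^ 2) - 2 * (t 0 * t 1 * t 2)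
        ∧ (norm3 c) ^ 2 + t 0 ^ 2 + t 1 ^ 2 + t 2 ^ 2 ≤ 3) := by
  have hn : norm3 c ^ 2 = c 0 ^ 2 + c 1 ^ 2 + c 2 ^ 2 := by
    rw [norm3, Real.sq_sqrt (Finset.sum_nonneg fun i _ => sq_nonneg _), Fin.sum_univ_three]
  have hn4 : norm3 c ^ 4 = (c 0 ^ 2 + c 1 ^ 2 + c 2 ^ 2) ^ 2 := by rw [← hn]; ring
  rw [hn4, hn]
  change _ ↔ (e4 c t ≥ 0 ∧ _)
  have hp := prod_eig c t
  rw [(rhoTilde_herm c t).posSemidef_iff_eigenvalues_nonneg]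
  generalize (rhoTilde_herm c t).eigenvalues = ev at hp
  generalize e4 c t = E at *
  constructor
  · intro h
    simp only [Fintype.prod_prod_type, Fin.prod_univ_two] at hp
    have ha : 0 ≤ ev (0, 0) := h _
    have hb : 0 ≤ ev (0, 1) := h _
    have hc : 0 ≤ ev (1, 0) := h _
    have hd : 0 ≤ ev (1, 1) := h _
    generalize ev (0, 0) = a at *
    generalize ev (0, 1) = b at *
    generalize ev (1, 0) = u at *
    generalize ev (1, 1) = d at *
    have p0 := hp 0
    have p1 := hp 1
    have p2 := hp (-1)
    have p3 := hp 2
    have k4 : E = 256 * (a * b * u * d) := by linarith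
    have k2 : 0 ≤ a * b + a * u + a * d + b * u + b * d + u * d := by positivity
    have k3 : 0 ≤ a * b * u + a * b * d + a * u * d + b * u * d := by positivity
    refine ⟨?_, ?_, ?_⟩
    · rw [k4]; positivity
    · nlinarith
    · nlinarith
  · rintro ⟨h4, h3, h2⟩ i
    by_contra hlt
    have hlt : ev i < 0 := not_le.mp hlt
    have h := hp (4 * ev i)
    rw [Finset.prod_eq_zero (Finset.mem_univ i) (sub_self _)] at h
    have hx : 4 * ev i < 0 := by linarith
    generalize 4 * ev i = x at *
    have q1 : 0 < x ^ 4 := by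
      have := hx.ne
      positivity
    have q2 : x ^ 3 < 0 := by nlinarith [sq_pos_of_neg hx]
    have q3 := mul_nonneg (sub_nonneg.mpr h2) (sq_nonneg x)
    have q4 := mul_nonneg (sub_nonneg.mpr h3) (neg_nonneg.mpr hx.le)
    linarith
end
end

section
/- Let c, t ∈ ℝ³. If ρ̃(c,t) is positive semidefinite and the determinant of its partial transpose on the second qubit is negative (det ρ̃(c,t)^{T_B} < 0; this determinant is real since ρ̃(c,t)^{T_B} is Hermitian), then t₁t₂t₃ < 0, i.e. the steering ellipsoid of the (necessarily entangled) state is left-handed. -/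
open Matrix Kronecker Polynomial
open scoped ComplexOrder

noncomputable section

/-- Partial transpose on the second qubit: `ρ^{T_B}_{(i,j),(k,l)} = ρ_{(i,l),(k,j)}`. -/
def ptB (ρ : Matrix (Fin 2 × Fin 2) (Fin 2 × Fin 2) ℂ) :
    Matrix (Fin 2 × Fin 2) (Fin 2 × Fin 2) ℂ :=
  Matrix.of fun p q => ρ (p.1, q.2) (q.1, p.2)

theorem det_four_prod (M : Matrix (Fin 2 × Fin 2) (Fin 2 × Fin 2) ℂ) :
    M.det = (!![M (0,0) (0,0), M (0,0) (0,1), M (0,0) (1,0), M (0,0) (1,1);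
      M (0,1) (0,0), M (0,1) (0,1), M (0,1) (1,0), M (0,1) (1,1);
      M (1,0) (0,0), M (1,0) (0,1), M (1,0) (1,0), M (1,0) (1,1);
      M (1,1) (0,0), M (1,1) (0,1), M (1,1) (1,0), M (1,1) (1,1)] :
        Matrix (Fin 4) (Fin 4) ℂ).det := by
  rw [← Matrix.det_submatrix_equiv_self (finProdFinEquiv (m := 2) (n := 2)).symm M]
  congr 1
  ext i j
  fin_cases i <;> fin_cases j <;> rfl

theorem det_sub_ptB (c t : Fin 3 → ℝ) :
    (rhoTilde c t).det - (ptB (rhoTilde c t)).det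
      = ((-(1 / 16) * (t 0 * t 1 * t 2) : ℝ) : ℂ) := by
  have hI : Complex.I ^ 2 = -1 := Complex.I_sq
  have hI4 : Complex.I ^ 4 = 1 := Complex.I_pow_four
  rw [det_four_prod, det_four_prod]
  have h1 : (Fin.succ (1 : Fin 3)) = (2 : Fin 4) := rfl
  have h2 : (Fin.succ (2 : Fin 3)) = (3 : Fin 4) := rfl
  simp [ptB, rhoTilde, Fin.sum_univ_three, pauli, h1, h2, Matrix.det_succ_row_zero,
    Fin.sum_univ_succ, Fin.succAbove, Matrix.one_apply]
  ring_nf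

/-- A canonical two-qubit state with negative partial-transpose determinant (i.e. an
entangled state) must have a left-handed steering ellipsoid: `t₁t₂t₃ < 0`. -/
theorem stmt1 (c t : Fin 3 → ℝ) (hpsd : (rhoTilde c t).PosSemidef)
    (hdet : ((ptB (rhoTilde c t)).det).re < 0) :
    t 0 * t 1 * t 2 < 0 := by
  have hd : 0 ≤ (rhoTilde c t).det.re := (Complex.le_def.1 hpsd.det_nonneg).1
  have h := congrArg Complex.re (det_sub_ptB c t)
  rw [Complex.sub_re, Complex.ofReal_re] at h
  linarith
end
end

section
/- Let 0 ≤ c ≤ 1 and r ≥ 0. The canonical state whose steering ellipsoid is the circle of radius r in the equatorial plane with centre (c,0,0), namely ρ̃((c,0,0),(r,r,0)), is positive semidefinite if and only if r ≤ (1 − c²)/2. -/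
open Matrix Kronecker Polynomial
open scoped ComplexOrder

noncomputable section

/-- The quadratic form of the state, as a combination of squared moduli. -/
lemma rho_form (c r : ℝ) (x : Fin 2 × Fin 2 → ℂ) :
    star x ⬝ᵥ (rhoTilde ![c, 0, 0] ![r, r, 0] *ᵥ x) =
      (((1 / 4) * (Complex.normSq (x (0, 0) + c * x (1, 0)) +
        Complex.normSq (x (1, 1) + c * x (0, 1)) +
        (1 - c ^ 2 - 2 * r) * (Complex.normSq (x (1, 0)) + Complex.normSq (x (0, 1))) +
        2 * r * Complex.normSq (x (1, 0) + x (0, 1))) : ℝ) : ℂ) := by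
  push_cast
  simp only [Complex.normSq_eq_conj_mul_self, map_add, map_mul, Complex.conj_ofReal]
  simp [dotProduct, mulVec, Fintype.sum_prod_type, Fin.sum_univ_succ, rhoTilde, pauli,
    Matrix.one_apply]
  ring_nf
  try simp only [Complex.I_sq]
  try ring

lemma rho_herm (c r : ℝ) : (rhoTilde ![c, 0, 0] ![r, r, 0]).IsHermitian := by
  ext ⟨i, j⟩ ⟨k, l⟩
  fin_cases i <;> fin_cases j <;> fin_cases k <;> fin_cases l <;>
    simp [rhoTilde, pauli, Fin.sum_univ_succ] <;> ring

/-- Physicality boundary for a circular steering ellipsoid of radius `r` in the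
equatorial plane with centre `(c,0,0)`: physical iff `r ≤ (1 - c²)/2`. -/
theorem stmt3 (c r : ℝ) (hc0 : 0 ≤ c) (hc1 : c ≤ 1) (hr : 0 ≤ r) :
    (rhoTilde ![c, 0, 0] ![r, r, 0]).PosSemidef ↔ r ≤ (1 - c ^ 2) / 2 := by
  constructor
  · intro h
    have h1 := h.dotProduct_mulVec_nonneg
      (fun p => if p = (1, 0) then 1 else if p = (0, 1) then -1 else
        if p = (0, 0) then -(c : ℂ) else (c : ℂ))
    rw [rho_form, Complex.zero_le_real] at h1
    simp at h1
    linarith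
  · intro h
    refine PosSemidef.of_dotProduct_mulVec_nonneg (rho_herm c r) fun x => ?_
    rw [rho_form, Complex.zero_le_real]
    have h0 : 0 ≤ 1 - c ^ 2 - 2 * r := by linarith
    have := Complex.normSq_nonneg (x (0, 0) + c * x (1, 0))
    have := Complex.normSq_nonneg (x (1, 1) + c * x (0, 1))
    have := mul_nonneg h0 (add_nonneg (Complex.normSq_nonneg (x (1, 0)))
      (Complex.normSq_nonneg (x (0, 1))))
    have := mul_nonneg (mul_nonneg zero_le_two hr) (Complex.normSq_nonneg (x (1, 0) + x (0, 1)))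
    linarith
end
end

section
/- Let 0 ≤ c ≤ 1 and set s₁ = (3 − √(1+8c²))/4 and s₂ = √((1 − 4c² + √(1+8c²))/8). Then (a) ρ̃((c,0,0),(s₁,s₂,0)) is positive semidefinite, and (b) for all t₁, t₂ ∈ ℝ, if ρ̃((c,0,0),(t₁,t₂,0)) is positive semidefinite then |t₁t₂| ≤ s₁s₂. That is, among all physical equatorial-plane ellipses with centre (c,0,0), the maximal-area one has minor semiaxis s₁ (radial) and major semiaxis s₂. -/
open Matrix Kronecker Polynomial
open scoped ComplexOrder

noncomputable section

/-- The Hermitian form of `rhoTilde` split into its two real-parameter sectors. -/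
lemma form_eq (c t₁ t₂ : ℝ) (x : Fin 2 × Fin 2 → ℂ) :
    star x ⬝ᵥ (rhoTilde ![c, 0, 0] ![t₁, t₂, 0] *ᵥ x) =
      (((1 / 8 : ℝ) *
        (((1 + t₁ - t₂) * (x (0,0) + x (1,1)).re ^ 2
            + 2 * c * (x (0,0) + x (1,1)).re * (x (0,1) + x (1,0)).re
            + (1 + t₁ + t₂) * (x (0,1) + x (1,0)).re ^ 2)
        + ((1 + t₁ - t₂) * (x (0,0) + x (1,1)).im ^ 2
            + 2 * c * (x (0,0) + x (1,1)).im * (x (0,1) + x (1,0)).im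
            + (1 + t₁ + t₂) * (x (0,1) + x (1,0)).im ^ 2)
        + ((1 - t₁ + t₂) * (x (0,0) - x (1,1)).re ^ 2
            + 2 * (-c) * (x (0,0) - x (1,1)).re * (x (0,1) - x (1,0)).re
            + (1 - t₁ - t₂) * (x (0,1) - x (1,0)).re ^ 2)
        + ((1 - t₁ + t₂) * (x (0,0) - x (1,1)).im ^ 2
            + 2 * (-c) * (x (0,0) - x (1,1)).im * (x (0,1) - x (1,0)).im
            + (1 - t₁ - t₂) * (x (0,1) - x (1,0)).im ^ 2)) : ℝ) : ℂ) := by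
  simp only [dotProduct, mulVec, Fintype.sum_prod_type, Fin.sum_univ_two, Fin.sum_univ_three,
    rhoTilde, Matrix.smul_apply, Matrix.add_apply, kroneckerMap_apply, pauli, Matrix.one_apply]
  apply Complex.ext
  · rw [Complex.ofReal_re]
    simp
    ring
  · rw [Complex.ofReal_im]
    simp
    ring

lemma form_nonneg {A c C : ℝ} (hA : 0 ≤ A) (hC : 0 ≤ C) (h : c ^ 2 ≤ A * C) (u v : ℝ) :
    0 ≤ A * u ^ 2 + 2 * c * u * v + C * v ^ 2 := by
  rcases hA.eq_or_lt with rfl | hA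
  · have : c = 0 := by nlinarith
    subst this
    nlinarith [mul_nonneg hC (sq_nonneg v)]
  · have : 0 ≤ A * (A * u ^ 2 + 2 * c * u * v + C * v ^ 2) := by
      nlinarith [sq_nonneg (A * u + c * v), mul_nonneg (sub_nonneg.2 h) (sq_nonneg v)]
    exact nonneg_of_mul_nonneg_right this hA

lemma det_nonneg {A c C : ℝ} (h : ∀ u v : ℝ, 0 ≤ A * u ^ 2 + 2 * c * u * v + C * v ^ 2) :
    0 ≤ A ∧ 0 ≤ C ∧ c ^ 2 ≤ A * C := by
  have hA : 0 ≤ A := by simpa using h 1 0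
  have hC : 0 ≤ C := by simpa using h 0 1
  refine ⟨hA, hC, ?_⟩
  rcases hA.eq_or_lt with rfl | hA
  · have h1 := h (-(C + 1)) c
    have : c ^ 2 = 0 := by nlinarith [sq_nonneg c, mul_nonneg hC (sq_nonneg c)]
    simp [this]
  · have h1 : 0 ≤ A * (A * C - c ^ 2) := by
      have := h (-c) A
      nlinarith
    have := nonneg_of_mul_nonneg_right h1 hA
    linarith

lemma rho_hermitian (c t₁ t₂ : ℝ) : (rhoTilde ![c, 0, 0] ![t₁, t₂, 0]).IsHermitian := by
  ext ⟨i, j⟩ ⟨k, l⟩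
  fin_cases i <;> fin_cases j <;> fin_cases k <;> fin_cases l <;>
    simp [rhoTilde, pauli, Fin.sum_univ_three] <;> ring

lemma rho_psd_iff (c t₁ t₂ : ℝ) : (rhoTilde ![c, 0, 0] ![t₁, t₂, 0]).PosSemidef ↔
    (0 ≤ 1 + t₁ - t₂ ∧ 0 ≤ 1 + t₁ + t₂ ∧ c ^ 2 ≤ (1 + t₁ - t₂) * (1 + t₁ + t₂)) ∧
    (0 ≤ 1 - t₁ + t₂ ∧ 0 ≤ 1 - t₁ - t₂ ∧ (-c) ^ 2 ≤ (1 - t₁ + t₂) * (1 - t₁ - t₂)) := by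
  rw [posSemidef_iff_dotProduct_mulVec]
  constructor
  · rintro ⟨-, h⟩
    constructor
    · apply det_nonneg
      intro u v
      have := h (x := fun p => if p.1 = p.2 then (u : ℂ) else (v : ℂ))
      rw [form_eq, Complex.zero_le_real] at this
      simp at this
      nlinarith
    · apply det_nonneg
      intro u v
      have := h (x := fun p => if p.1 = p.2 then (if p.1 = 0 then (u : ℂ) else -(u : ℂ))
        else (if p.1 = 0 then (v : ℂ) else -(v : ℂ)))
      rw [form_eq, Complex.zero_le_real] at this
      simp at this
      nlinarith
  · rintro ⟨⟨h1, h2, h3⟩, h4, h5, h6⟩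
    refine ⟨rho_hermitian c t₁ t₂, fun x => ?_⟩
    rw [form_eq, Complex.zero_le_real]
    have := form_nonneg h1 h2 h3
    have := form_nonneg h4 h5 h6
    apply mul_nonneg (by norm_num)
    refine add_nonneg (add_nonneg (add_nonneg ?_ ?_) ?_) ?_ <;> apply_assumption

lemma area_bound {x s : ℝ} (hx0 : 0 ≤ x) (hx1 : x ≤ 1) (hs0 : 0 ≤ s) (hs1 : s ≤ 1 / 2) :
    x ^ 2 * ((1 - x) ^ 2 - (1 - s) * (1 - 2 * s)) ≤ s ^ 2 * (s * (1 - s)) := by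
  have h : 0 ≤ -x ^ 2 + 2 * (1 - s) * x + s * (1 - s) := by
    nlinarith [mul_nonneg hx0 (sub_nonneg.2 hx1), mul_nonneg hs0 (sub_nonneg.2 hs1),
      mul_nonneg hx0 (sub_nonneg.2 hs1), mul_nonneg (sub_nonneg.2 hx1) (sub_nonneg.2 hs1)]
  nlinarith [mul_nonneg (sq_nonneg (x - s)) h]

/-- The maximal-area physical equatorial-plane ellipse with centre `(c,0,0)` has radial
minor semiaxis `s₁ = (3 − √(1+8c²))/4` and major semiaxis
`s₂ = √((1 − 4c² + √(1+8c²))/8)`. -/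
theorem stmt4 (c : ℝ) (hc0 : 0 ≤ c) (hc1 : c ≤ 1) :
    (rhoTilde ![c, 0, 0]
        ![(3 - Real.sqrt (1 + 8 * c ^ 2)) / 4,
          Real.sqrt ((1 - 4 * c ^ 2 + Real.sqrt (1 + 8 * c ^ 2)) / 8), 0]).PosSemidef
    ∧ ∀ t₁ t₂ : ℝ, (rhoTilde ![c, 0, 0] ![t₁, t₂, 0]).PosSemidef →
        |t₁ * t₂| ≤ (3 - Real.sqrt (1 + 8 * c ^ 2)) / 4
          * Real.sqrt ((1 - 4 * c ^ 2 + Real.sqrt (1 + 8 * c ^ 2)) / 8) := by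
  obtain ⟨r, hr⟩ : ∃ r, r = Real.sqrt (1 + 8 * c ^ 2) := ⟨_, rfl⟩
  rw [← hr]
  have hr2 : r ^ 2 = 1 + 8 * c ^ 2 := by rw [hr]; exact Real.sq_sqrt (by positivity)
  have hr0 : 0 ≤ r := by rw [hr]; positivity
  have hr1 : 1 ≤ r := by nlinarith [sq_nonneg c]
  have hr3 : r ≤ 3 := by nlinarith
  obtain ⟨s, hs⟩ : ∃ s, s = (3 - r) / 4 := ⟨_, rfl⟩
  have hs0 : 0 ≤ s := by rw [hs]; linarith
  have hs1 : s ≤ 1 / 2 := by rw [hs]; linarith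
  have hc2 : c ^ 2 = (1 - s) * (1 - 2 * s) := by rw [hs]; linarith
  have hq : (1 - 4 * c ^ 2 + r) / 8 = s * (1 - s) := by rw [hs]; linarith
  rw [hq, ← hs]
  have hq0 : 0 ≤ s * (1 - s) := mul_nonneg hs0 (by linarith)
  obtain ⟨y, hy⟩ : ∃ y, y = Real.sqrt (s * (1 - s)) := ⟨_, rfl⟩
  rw [← hy]
  have hy0 : 0 ≤ y := by rw [hy]; positivity
  have hy2 : y ^ 2 = s * (1 - s) := by rw [hy]; exact Real.sq_sqrt hq0
  have hy1 : y ≤ 1 - s := abs_le_of_sq_le_sq' (by nlinarith) (by linarith) |>.2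
  constructor
  · rw [rho_psd_iff]
    refine ⟨⟨?_, ?_, ?_⟩, ?_, ?_, ?_⟩ <;> nlinarith
  · intro t₁ t₂ h
    rw [rho_psd_iff] at h
    obtain ⟨⟨h1, h2, h3⟩, h4, h5, h6⟩ := h
    have hx1 : |t₁| ≤ 1 := abs_le.2 ⟨by linarith, by linarith⟩
    have hb := area_bound (abs_nonneg t₁) hx1 hs0 hs1
    have ht : t₂ ^ 2 ≤ (1 - |t₁|) ^ 2 - (1 - s) * (1 - 2 * s) := by
      rw [← hc2]
      rcases abs_cases t₁ with ⟨e, _⟩ | ⟨e, _⟩ <;> rw [e] <;> nlinarith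
    apply abs_le_of_sq_le_sq _ (mul_nonneg hs0 hy0)
    calc (t₁ * t₂) ^ 2 = |t₁| ^ 2 * t₂ ^ 2 := by rw [sq_abs]; ring
      _ ≤ |t₁| ^ 2 * ((1 - |t₁|) ^ 2 - (1 - s) * (1 - 2 * s)) := by gcongr
      _ ≤ s ^ 2 * (s * (1 - s)) := hb
      _ = (s * y) ^ 2 := by rw [mul_pow, hy2]
end
end

section
/- Let 0 ≤ c ≤ 1 and r ≥ 0. The canonical state with a left-handed spherical steering ellipsoid of radius r centred at (0,0,c), namely ρ̃((0,0,c),(r,r,−r)), is positive semidefinite if and only if r ≤ 1 − c. (This is the physical–unphysical boundary for spherical ellipsoids: a left-handed sphere inside the Bloch sphere is always physical.) -/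
open Matrix Kronecker Polynomial
open scoped ComplexOrder

noncomputable section

/-- Physical–unphysical boundary for left-handed spherical steering ellipsoids of
radius `r` centred at `(0,0,c)`: physical iff `r ≤ 1 − c`. -/
theorem stmt5 (c r : ℝ) (hc0 : 0 ≤ c) (hc1 : c ≤ 1) (hr : 0 ≤ r) :
    (rhoTilde ![0, 0, c] ![r, r, -r]).PosSemidef ↔ r ≤ 1 - c := by
  have hM : rhoTilde ![0, 0, c] ![r, r, -r] = Matrix.of fun i j =>
      (1 / 4 : ℂ) * (if i = j then
        (if i = (0, 0) then 1 + c - r else if i = (0, 1) then 1 + c + r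
          else if i = (1, 0) then 1 - c + r else 1 - c - r)
        else if (i = (0, 1) ∧ j = (1, 0)) ∨ (i = (1, 0) ∧ j = (0, 1)) then 2 * r else 0) := by
    ext ⟨i1, i2⟩ ⟨j1, j2⟩
    fin_cases i1 <;> fin_cases i2 <;> fin_cases j1 <;> fin_cases j2 <;>
      simp [rhoTilde, pauli, Fin.sum_univ_three, Matrix.one_apply] <;> ring
  rw [hM]
  constructor
  · intro h
    have h1 := h.diag_nonneg (i := ((1, 1) : Fin 2 × Fin 2))
    rw [Complex.nonneg_iff] at h1
    have h2 := h1.1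
    simp at h2
    linarith
  · intro h
    refine Matrix.PosSemidef.of_dotProduct_mulVec_nonneg ?_ ?_
    · ext ⟨i1, i2⟩ ⟨j1, j2⟩
      rw [Matrix.conjTranspose_apply]
      fin_cases i1 <;> fin_cases i2 <;> fin_cases j1 <;> fin_cases j2 <;> simp
    · intro x
      have key : ∀ y z : ℝ, 0 ≤ (1 + c + r) * y ^ 2 + (1 - c + r) * z ^ 2 + 4 * r * (y * z) := by
        intro y z
        have hd : 0 ≤ (1 + c + r) * (1 - c + r) - 4 * r ^ 2 := by
          nlinarith [mul_nonneg (by linarith : 0 ≤ 1 - r - c) (by linarith : 0 ≤ 1 + 3 * r),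
            mul_nonneg hc0 (by linarith : 0 ≤ 1 + 3 * r - c)]
        have hp : 0 < 1 + c + r := by linarith
        refine nonneg_of_mul_nonneg_right ?_ hp
        nlinarith [sq_nonneg ((1 + c + r) * y + 2 * r * z), mul_nonneg hd (sq_nonneg z)]
      have k1 := key (x (0, 1)).re (x (1, 0)).re
      have k2 := key (x (0, 1)).im (x (1, 0)).im
      have k3 := mul_nonneg (by linarith : 0 ≤ 1 + c - r)
        (add_nonneg (sq_nonneg (x (0, 0)).re) (sq_nonneg (x (0, 0)).im))
      have k4 := mul_nonneg (by linarith : 0 ≤ 1 - c - r)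
        (add_nonneg (sq_nonneg (x (1, 1)).re) (sq_nonneg (x (1, 1)).im))
      rw [Complex.nonneg_iff]
      simp [dotProduct, Matrix.mulVec, Fintype.sum_prod_type, Fin.sum_univ_two]
      constructor
      · nlinarith
      · ring
end
end

section
/- Let 0 ≤ c ≤ 1 and r ≥ 0. The canonical state with a right-handed spherical steering ellipsoid of radius r centred at (0,0,c), namely ρ̃((0,0,c),(r,r,r)), is positive semidefinite if and only if r ≤ (√(4 − 3c²) − 1)/3. (This is the separable–entangled boundary for spherical steering ellipsoids: right-handed spheres exceeding this radius are unphysical, and left-handed spheres exceeding it are entangled.) -/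
open Matrix Kronecker Polynomial
open scoped ComplexOrder

noncomputable section

/-- Explicit entries of the canonical state. -/
lemma rho_entries (c r : ℝ) : rhoTilde ![0, 0, c] ![r, r, r] =
    Matrix.of fun i j => (((1 / 4 : ℝ) * (match i, j with
      | (0, 0), (0, 0) => 1 + c + r
      | (0, 1), (0, 1) => 1 + c - r
      | (1, 0), (1, 0) => 1 - c - r
      | (1, 1), (1, 1) => 1 - c + r
      | (0, 1), (1, 0) => 2 * r
      | (1, 0), (0, 1) => 2 * r
      | _, _ => 0) : ℝ) : ℂ) := by
  ext ⟨i, j⟩ ⟨k, l⟩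
  fin_cases i <;> fin_cases j <;> fin_cases k <;> fin_cases l <;>
    simp [rhoTilde, pauli, Fin.sum_univ_three] <;> ring_nf

/-- Separable–entangled boundary for spherical steering ellipsoids: the right-handed
sphere of radius `r` centred at `(0,0,c)` is physical iff `r ≤ (√(4 − 3c²) − 1)/3`. -/
theorem stmt6 (c r : ℝ) (hc0 : 0 ≤ c) (hc1 : c ≤ 1) (hr : 0 ≤ r) :
    (rhoTilde ![0, 0, c] ![r, r, r]).PosSemidef ↔
      r ≤ (Real.sqrt (4 - 3 * c ^ 2) - 1) / 3 := by
  have h4 : 0 ≤ 4 - 3 * c ^ 2 := by nlinarith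
  have key : r ≤ (Real.sqrt (4 - 3 * c ^ 2) - 1) / 3 ↔
      4 * r ^ 2 ≤ (1 + c - r) * (1 - c - r) := by
    have : r ≤ (Real.sqrt (4 - 3 * c ^ 2) - 1) / 3 ↔ 3 * r + 1 ≤ Real.sqrt (4 - 3 * c ^ 2) := by
      constructor <;> intro h <;> linarith
    rw [this, Real.le_sqrt' (by linarith)]
    constructor <;> intro h <;> nlinarith
  rw [key, rho_entries]
  constructor
  · intro h
    have h2 := (h.submatrix (![(0, 1), (1, 0)] : Fin 2 → Fin 2 × Fin 2)).det_nonneg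
    rw [Matrix.det_fin_two] at h2
    simp only [Matrix.submatrix_apply, Matrix.of_apply, Matrix.cons_val_zero,
      Matrix.cons_val_one] at h2
    norm_cast at h2
    nlinarith
  · intro h
    have hr3 : r ≤ 1 / 3 := by nlinarith
    have ha : 0 < 1 + c - r := by linarith
    have hd : (Matrix.diagonal (fun i : Fin 2 × Fin 2 => (((match i with
        | (0, 0) => (1 + c + r) / 4
        | (0, 1) => 0
        | (1, 0) => ((1 + c - r) * (1 - c - r) - 4 * r ^ 2) / (4 * (1 + c - r))
        | (1, 1) => (1 - c + r) / 4) : ℝ) : ℂ))).PosSemidef := by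
      refine Matrix.PosSemidef.diagonal ?_
      rintro ⟨i, j⟩
      have e := div_nonneg (sub_nonneg.2 h) (by linarith : 0 ≤ 4 * (1 + c - r))
      fin_cases i <;> fin_cases j <;> refine Complex.zero_le_real.2 ?_ <;> dsimp only <;>
        first | exact e | linarith
    let v : Fin 2 × Fin 2 → ℂ := fun i => (((match i with
        | (0, 1) => 1 + c - r
        | (1, 0) => 2 * r
        | _ => 0) : ℝ) : ℂ)
    have hv := (Matrix.posSemidef_vecMulVec_self_star v).smul
      (Complex.zero_le_real.2 (by positivity : 0 ≤ 1 / (4 * (1 + c - r))))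
    convert hd.add hv using 1
    ext ⟨i, j⟩ ⟨k, l⟩
    have ha' : (1 + (c : ℂ) - r) ≠ 0 := by exact_mod_cast ha.ne'
    fin_cases i <;> fin_cases j <;> fin_cases k <;> fin_cases l <;>
      simp only [Matrix.of_apply, Matrix.add_apply, Matrix.smul_apply, Matrix.diagonal_apply,
        Matrix.vecMulVec_apply, v, Pi.star_apply, smul_eq_mul, Complex.star_def,
        Complex.conj_ofReal] <;>
      simp <;> field_simp <;> ring
end
end

section
/- Let ρ be a 4×4 positive semidefinite complex matrix of unit trace (a two-qubit state) with ‖b‖ < 1. Then γ_b⁴ |det Θ(ρ)| ≤ (1 − ‖c_A‖)²; equivalently, the steering-ellipsoid volume satisfies V_A ≤ (4π/3)(1 − ‖c_A‖)². In particular any operator of this form whose ellipsoid volume exceeds (4π/3)(1 − ‖c_A‖)² is unphysical. -/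
open Matrix Kronecker Polynomial
open scoped ComplexOrder

noncomputable section

/-- The Pauli-basis expansion matrix `Θ(ρ)_{μν} = Re tr(ρ (σ_μ ⊗ σ_ν))`. -/
def Theta (ρ : Matrix (Fin 2 × Fin 2) (Fin 2 × Fin 2) ℂ) : Matrix (Fin 4) (Fin 4) ℝ :=
  Matrix.of fun μ ν => ((ρ * (pauli μ ⊗ₖ pauli ν)).trace).re


/-- Realignment of a bipartite matrix. -/
def realign (ρ : Matrix (Fin 2 × Fin 2) (Fin 2 × Fin 2) ℂ) :
    Matrix (Fin 2 × Fin 2) (Fin 2 × Fin 2) ℂ :=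
  Matrix.of fun p q => ρ (p.1, q.1) (p.2, q.2)

/-- Block of a bipartite matrix. -/
def blk (ρ : Matrix (Fin 2 × Fin 2) (Fin 2 × Fin 2) ℂ) (i i' : Fin 2) :
    Matrix (Fin 2) (Fin 2) ℂ := ρ.submatrix (fun j => (i, j)) (fun j => (i', j))

lemma pauli_herm (μ : Fin 4) : (pauli μ)ᴴ = pauli μ := by
  fin_cases μ <;> ext i j <;> fin_cases i <;> fin_cases j <;> simp [pauli]

lemma theta_cast (ρ : Matrix (Fin 2 × Fin 2) (Fin 2 × Fin 2) ℂ) (h : ρ.IsHermitian)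
    (μ ν : Fin 4) : ((Theta ρ μ ν : ℝ) : ℂ) = (ρ * (pauli μ ⊗ₖ pauli ν)).trace := by
  have h1 : star (ρ * (pauli μ ⊗ₖ pauli ν)).trace = (ρ * (pauli μ ⊗ₖ pauli ν)).trace := by
    rw [← Matrix.trace_conjTranspose, Matrix.conjTranspose_mul, h.eq,
      Matrix.conjTranspose_kronecker, pauli_herm, pauli_herm, Matrix.trace_mul_comm]
  exact Complex.conj_eq_iff_re.mp h1

/-- Pauli matrices as a change of basis. -/
def pauliS : Matrix (Fin 4) (Fin 2 × Fin 2) ℂ := Matrix.of fun μ p => pauli μ p.2 p.1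

lemma theta_eq (ρ : Matrix (Fin 2 × Fin 2) (Fin 2 × Fin 2) ℂ) (h : ρ.IsHermitian) :
    (Theta ρ).map (fun x : ℝ => (x : ℂ)) = pauliS * realign ρ * pauliSᵀ := by
  ext μ ν
  rw [Matrix.map_apply, theta_cast ρ h]
  simp only [Matrix.trace, Matrix.mul_apply, Matrix.diag, Fintype.sum_prod_type, Fin.sum_univ_two,
    Matrix.kroneckerMap_apply, pauliS, realign, Matrix.of_apply, Matrix.transpose_apply]
  ring

lemma pauliS_mul : pauliS * pauliSᴴ = (2 : ℂ) • 1 := by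
  ext μ ν
  simp only [Matrix.mul_apply, Fintype.sum_prod_type, Fin.sum_univ_two, pauliS, Matrix.of_apply,
    Matrix.conjTranspose_apply]
  fin_cases μ <;> fin_cases ν <;> simp [pauli] <;> norm_num

lemma det_theta (ρ : Matrix (Fin 2 × Fin 2) (Fin 2 × Fin 2) ℂ) (h : ρ.IsHermitian) :
    |(Theta ρ).det| = 16 * ‖(realign ρ).det‖ := by
  let e : Fin 2 × Fin 2 ≃ Fin 4 := finProdFinEquiv
  let S := pauliS.submatrix id e.symm
  have hS : S * Sᴴ = (2 : ℂ) • 1 := by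
    rw [← pauliS_mul, Matrix.conjTranspose_submatrix, Matrix.submatrix_mul_equiv,
      Matrix.submatrix_id_id]
  have hd : ‖S.det‖ ^ 2 = 16 := by
    have := congrArg (fun M => ‖Matrix.det M‖) hS
    simp only [Matrix.det_mul, Matrix.det_conjTranspose, norm_mul, norm_star, Matrix.det_smul,
      Matrix.det_one] at this
    rw [sq, this]; norm_num
  have h2 : (Theta ρ).map (fun x : ℝ => (x : ℂ)) = S * (realign ρ).submatrix e.symm e.symm * Sᵀ := by
    rw [theta_eq ρ h, Matrix.transpose_submatrix, Matrix.submatrix_mul_equiv,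
      Matrix.submatrix_mul_equiv, Matrix.submatrix_id_id]
  have h3 : (((Theta ρ).det : ℝ) : ℂ) = ((Theta ρ).map (fun x : ℝ => (x : ℂ))).det :=
    Complex.ofRealHom.map_det (Theta ρ)
  have h4 : |(Theta ρ).det| = ‖(((Theta ρ).det : ℝ) : ℂ)‖ := by
    rw [Complex.norm_real, Real.norm_eq_abs]
  rw [h4, h3, h2, Matrix.det_mul, Matrix.det_mul, Matrix.det_transpose,
    Matrix.det_submatrix_equiv_self, norm_mul, norm_mul, ← hd]
  ring

lemma realign_conj (A B : Matrix (Fin 2) (Fin 2) ℂ)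
    (ρ : Matrix (Fin 2 × Fin 2) (Fin 2 × Fin 2) ℂ) :
    realign ((A ⊗ₖ B) * ρ * (A ⊗ₖ B)ᴴ) =
      (A ⊗ₖ A.map star) * realign ρ * (B ⊗ₖ B.map star)ᵀ := by
  ext ⟨i, i'⟩ ⟨j, j'⟩
  simp only [Matrix.mul_apply, Fintype.sum_prod_type, Fin.sum_univ_two,
    Matrix.kroneckerMap_apply, realign, Matrix.of_apply, Matrix.transpose_apply,
    Matrix.conjTranspose_apply, Matrix.map_apply, star_mul']
  ring

lemma det_realign_conj (A B : Matrix (Fin 2) (Fin 2) ℂ)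
    (ρ : Matrix (Fin 2 × Fin 2) (Fin 2 × Fin 2) ℂ) :
    ‖(realign ((A ⊗ₖ B) * ρ * (A ⊗ₖ B)ᴴ)).det‖ =
      ‖A.det‖ ^ 4 * ‖B.det‖ ^ 4 * ‖(realign ρ).det‖ := by
  have h : ∀ M : Matrix (Fin 2) (Fin 2) ℂ, ‖(M.map star).det‖ = ‖M.det‖ := by
    intro M
    have : M.map star = Mᴴᵀ := by ext; simp
    rw [this, Matrix.det_transpose, Matrix.det_conjTranspose, norm_star]
  rw [realign_conj, Matrix.det_mul, Matrix.det_mul, Matrix.det_transpose, Matrix.det_kronecker,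
    Matrix.det_kronecker]
  simp only [norm_mul, norm_pow, h, Fintype.card_fin]
  ring

lemma exists_unitary_diag (K : Matrix (Fin 2) (Fin 2) ℂ) (h : K.IsHermitian) :
    ∃ U : Matrix (Fin 2) (Fin 2) ℂ, U * Uᴴ = 1 ∧ Uᴴ * U = 1 ∧
      (U * K * Uᴴ) 0 1 = 0 ∧ (U * K * Uᴴ) 1 0 = 0 := by
  let V : Matrix (Fin 2) (Fin 2) ℂ := h.eigenvectorUnitary
  have hV1 : Vᴴ * V = 1 := Unitary.coe_star_mul_self h.eigenvectorUnitary
  have hV2 : V * Vᴴ = 1 := Unitary.coe_mul_star_self h.eigenvectorUnitary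
  have hs : K = V * Matrix.diagonal (RCLike.ofReal ∘ h.eigenvalues) * Vᴴ := by
    have := h.spectral_theorem
    rw [Unitary.conjStarAlgAut_apply] at this
    exact this
  have hD : Vᴴ * K * V = Matrix.diagonal (RCLike.ofReal ∘ h.eigenvalues) := by
    have : Vᴴ * (V * Matrix.diagonal (RCLike.ofReal ∘ h.eigenvalues) * Vᴴ) * V =
      (Vᴴ * V) * Matrix.diagonal (RCLike.ofReal ∘ h.eigenvalues) * (Vᴴ * V) := by
      simp only [Matrix.mul_assoc]
    rw [← hs, hV1] at this
    simpa using this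
  refine ⟨Vᴴ, by simpa using hV1, by simpa using hV2, ?_, ?_⟩ <;>
  · rw [Matrix.conjTranspose_conjTranspose, hD]; simp

open scoped MatrixOrder Matrix.Norms.L2Operator in
lemma psd_factor (D : Matrix (Fin 2) (Fin 2) ℂ) (hD : D.PosSemidef) : ∃ N, D = Nᴴ * N := by
  obtain ⟨B, hB⟩ := CStarAlgebra.nonneg_iff_eq_star_mul_self.mp hD.nonneg
  exact ⟨B, hB⟩

lemma simul_diag (D Q : Matrix (Fin 2) (Fin 2) ℂ) (hD : D.PosSemidef) (hdet : D.det ≠ 0)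
    (hQ : Q.IsHermitian) : ∃ B : Matrix (Fin 2) (Fin 2) ℂ, B * D * Bᴴ = 1 ∧
      (B * Q * Bᴴ) 0 1 = 0 ∧ (B * Q * Bᴴ) 1 0 = 0 := by
  obtain ⟨N, hN⟩ := psd_factor D hD
  have hNd : IsUnit N.det := by
    rw [isUnit_iff_ne_zero]
    intro h0
    apply hdet
    rw [hN, Matrix.det_mul, h0, mul_zero]
  let C := (N⁻¹)ᴴ
  have hC : C * D * Cᴴ = 1 := by
    have h1 : C * Nᴴ = 1 := by
      rw [← Matrix.conjTranspose_mul, Matrix.mul_nonsing_inv N hNd, Matrix.conjTranspose_one]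
    have h2 : N * Cᴴ = 1 := by
      simp only [C, Matrix.conjTranspose_conjTranspose]; exact Matrix.mul_nonsing_inv N hNd
    rw [hN, ← Matrix.mul_assoc, h1, Matrix.one_mul, h2]
  have hH : (C * Q * Cᴴ).IsHermitian := Matrix.isHermitian_mul_mul_conjTranspose C hQ
  obtain ⟨U, hU1, hU2, h01, h10⟩ := exists_unitary_diag _ hH
  have key : ∀ X, U * C * X * (U * C)ᴴ = U * (C * X * Cᴴ) * Uᴴ := by
    intro X
    simp only [Matrix.conjTranspose_mul, Matrix.mul_assoc]
  refine ⟨U * C, ?_, ?_, ?_⟩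
  · rw [key, hC, Matrix.mul_one, hU1]
  · rw [key]; exact h01
  · rw [key]; exact h10

lemma psd_minor (ρ : Matrix (Fin 2 × Fin 2) (Fin 2 × Fin 2) ℂ) (h : ρ.PosSemidef)
    (a b : Fin 2 × Fin 2) : ‖ρ a b‖ ^ 2 ≤ (ρ a a).re * (ρ b b).re := by
  have h1 := (h.submatrix ![a, b]).det_nonneg
  have ha := h.diag_nonneg (i := a)
  have hb := h.diag_nonneg (i := b)
  rw [Complex.nonneg_iff] at ha hb
  rw [Matrix.det_fin_two] at h1
  simp only [Matrix.submatrix_apply, Matrix.cons_val_zero, Matrix.cons_val_one] at h1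
  rw [← h.isHermitian.apply b a, Complex.star_def, Complex.mul_conj, Complex.normSq_eq_norm_sq] at h1
  have h2 := (Complex.nonneg_iff.mp h1).1
  rw [Complex.sub_re, Complex.mul_re, Complex.ofReal_re, ← ha.2] at h2
  linarith

lemma det_realign (ρ : Matrix (Fin 2 × Fin 2) (Fin 2 × Fin 2) ℂ)
    (hp : blk ρ 0 0 0 1 = 0) (hp' : blk ρ 0 0 1 0 = 0)
    (hq : blk ρ 1 1 0 1 = 0) (hq' : blk ρ 1 1 1 0 = 0) :
    (realign ρ).det = (ρ (0, 0) (0, 0) * ρ (1, 1) (1, 1) - ρ (0, 1) (0, 1) * ρ (1, 0) (1, 0)) *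
      (ρ (0, 0) (1, 1) * ρ (1, 1) (0, 0) - ρ (0, 1) (1, 0) * ρ (1, 0) (0, 1)) := by
  simp only [blk, Matrix.submatrix_apply] at hp hp' hq hq'
  have e : (realign ρ).submatrix finProdFinEquiv.symm finProdFinEquiv.symm =
      !![ρ (0, 0) (0, 0), 0, 0, ρ (0, 1) (0, 1);
         ρ (0, 0) (1, 0), ρ (0, 0) (1, 1), ρ (0, 1) (1, 0), ρ (0, 1) (1, 1);
         ρ (1, 0) (0, 0), ρ (1, 0) (0, 1), ρ (1, 1) (0, 0), ρ (1, 1) (0, 1);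
         ρ (1, 0) (1, 0), 0, 0, ρ (1, 1) (1, 1)] := by
    ext i j
    fin_cases i <;> fin_cases j <;> first | rfl | exact hp | exact hp' | exact hq | exact hq'
  rw [← Matrix.det_submatrix_equiv_self finProdFinEquiv.symm (realign ρ), e]
  simp [Matrix.det_succ_row_zero, Fin.sum_univ_succ, Fin.succAbove]
  ring

/-- The bound in canonical form. -/
lemma canonical_bound (ρ : Matrix (Fin 2 × Fin 2) (Fin 2 × Fin 2) ℂ) (h : ρ.PosSemidef)
    (hsum : blk ρ 0 0 + blk ρ 1 1 = 1) (h01 : blk ρ 1 1 0 1 = 0) (h10 : blk ρ 1 1 1 0 = 0) :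
    ‖(realign ρ).det‖ ≤ ((blk ρ 0 0).trace.re) ^ 2 ∧
    ‖(realign ρ).det‖ ≤ ((blk ρ 1 1).trace.re) ^ 2 := by
  have e : ∀ i j, blk ρ 0 0 i j = (1 : Matrix (Fin 2) (Fin 2) ℂ) i j - blk ρ 1 1 i j := by
    intro i j
    rw [← hsum, Matrix.add_apply, add_sub_cancel_right]
  have hp : blk ρ 0 0 0 1 = 0 := by rw [e, h01]; simp
  have hp' : blk ρ 0 0 1 0 = 0 := by rw [e, h10]; simp
  have e0 := congrArg Complex.re (e 0 0)
  have e1 := congrArg Complex.re (e 1 1)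
  have m1 := psd_minor ρ h (0, 0) (1, 1)
  have m2 := psd_minor ρ h (0, 1) (1, 0)
  have hr : ∀ a, 0 ≤ (ρ a a).re ∧ ρ a a = ((ρ a a).re : ℂ) := by
    intro a
    have := Complex.nonneg_iff.mp (h.diag_nonneg (i := a))
    exact ⟨this.1, Complex.ext rfl this.2.symm⟩
  rw [det_realign ρ hp hp' h01 h10, ← h.isHermitian.apply (1, 1) (0, 0),
    ← h.isHermitian.apply (1, 0) (0, 1), Complex.star_def, Complex.mul_conj,
    Complex.mul_conj, Complex.normSq_eq_norm_sq, Complex.normSq_eq_norm_sq,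
    (hr (0, 0)).2, (hr (0, 1)).2, (hr (1, 0)).2, (hr (1, 1)).2, Matrix.trace_fin_two,
    Matrix.trace_fin_two]
  have n0 := (hr (0, 0)).1
  have n1 := (hr (0, 1)).1
  have n2 := (hr (1, 0)).1
  have n3 := (hr (1, 1)).1
  simp only [blk, Matrix.submatrix_apply, Matrix.one_apply_eq, Complex.sub_re, Complex.one_re,
    Complex.add_re] at e0 e1 ⊢
  have s1 := sq_nonneg ‖ρ (0, 0) (1, 1)‖
  have s2 := sq_nonneg ‖ρ (0, 1) (1, 0)‖
  generalize ‖ρ (0, 0) (1, 1)‖ ^ 2 = u at *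
  generalize ‖ρ (0, 1) (1, 0)‖ ^ 2 = v at *
  generalize (ρ (0, 0) (0, 0)).re = p0 at *
  generalize (ρ (0, 1) (0, 1)).re = p1 at *
  generalize (ρ (1, 0) (1, 0)).re = q0 at *
  generalize (ρ (1, 1) (1, 1)).re = q1 at *
  norm_cast
  rw [Real.norm_eq_abs, abs_mul]
  have k1 : |p0 * q1 - p1 * q0| = |p0 - p1| := by
    congr 1; rw [e0, e1]; ring
  have k2 : |p0 * q1 - p1 * q0| = |q1 - q0| := by
    rw [k1, e0, e1]; congr 1; ring
  have l1 : |p0 - p1| ≤ p0 + p1 := by rw [abs_le]; constructor <;> linarith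
  have l2 : |q1 - q0| ≤ q0 + q1 := by rw [abs_le]; constructor <;> linarith
  have r1 : |u - v| ≤ p0 + p1 := by
    rw [abs_le]; constructor <;> nlinarith [mul_nonneg n0 n1]
  have r2 : |u - v| ≤ q0 + q1 := by
    rw [abs_le]; constructor <;> nlinarith [mul_nonneg n2 n3]
  constructor
  · rw [k1, sq]; exact mul_le_mul l1 r1 (abs_nonneg _) (by linarith)
  · rw [k2, sq]; exact mul_le_mul l2 r2 (abs_nonneg _) (by linarith)

lemma blk_conj (A B : Matrix (Fin 2) (Fin 2) ℂ)
    (ρ : Matrix (Fin 2 × Fin 2) (Fin 2 × Fin 2) ℂ) (i i' : Fin 2) :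
    blk ((A ⊗ₖ B) * ρ * (A ⊗ₖ B)ᴴ) i i' =
      ∑ k, ∑ l, (A i k * star (A i' l)) • (B * blk ρ k l * Bᴴ) := by
  ext j j'
  simp only [Matrix.mul_apply, Fintype.sum_prod_type, Fin.sum_univ_two,
    Matrix.kroneckerMap_apply, blk, Matrix.submatrix_apply, Matrix.add_apply, Matrix.smul_apply,
    Matrix.conjTranspose_apply, star_mul', smul_eq_mul]
  ring

/-- General form: K is the matrix of traces of blocks against inverse of the marginal. -/
lemma general_bound (ρ : Matrix (Fin 2 × Fin 2) (Fin 2 × Fin 2) ℂ) (h : ρ.PosSemidef)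
    (hdet : (blk ρ 0 0 + blk ρ 1 1).det ≠ 0) (K : Matrix (Fin 2) (Fin 2) ℂ)
    (hK : K.IsHermitian)
    (hKb : ∀ i j, K i j = (blk ρ i j * (blk ρ 0 0 + blk ρ 1 1)⁻¹).trace) :
    ∃ x y : ℝ, (x : ℂ) + y = K.trace ∧ (x : ℂ) * y = K.det ∧
      ‖(realign ρ).det‖ ≤ ‖(blk ρ 0 0 + blk ρ 1 1).det‖ ^ 2 * x ^ 2 ∧
      ‖(realign ρ).det‖ ≤ ‖(blk ρ 0 0 + blk ρ 1 1).det‖ ^ 2 * y ^ 2 := by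
  obtain ⟨U, hU1, hU2, h01, h10⟩ := exists_unitary_diag K hK
  have hb0 : (blk ρ 0 0).PosSemidef := h.submatrix _
  have hb1 : (blk ρ 1 1).PosSemidef := h.submatrix _
  have hD := hb0.add hb1
  have hQ : (blk ((U ⊗ₖ (1 : Matrix (Fin 2) (Fin 2) ℂ)) * ρ * (U ⊗ₖ 1)ᴴ) 1 1).IsHermitian :=
    (Matrix.PosSemidef.submatrix (h.mul_mul_conjTranspose_same _) _).isHermitian
  obtain ⟨B, hB, hB01, hB10⟩ := simul_diag _ _ hD hdet hQ
  have hQ2 : B * blk ((U ⊗ₖ (1 : Matrix (Fin 2) (Fin 2) ℂ)) * ρ * (U ⊗ₖ 1)ᴴ) 1 1 * Bᴴ =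
      blk ((U ⊗ₖ B) * ρ * (U ⊗ₖ B)ᴴ) 1 1 := by
    rw [blk_conj, blk_conj]
    simp [Fin.sum_univ_two, Matrix.mul_add, Matrix.add_mul]
  rw [hQ2] at hB01 hB10
  have hinv : (blk ρ 0 0 + blk ρ 1 1)⁻¹ = Bᴴ * B := by
    apply Matrix.inv_eq_left_inv
    rw [Matrix.mul_assoc]
    exact mul_eq_one_comm.mp hB
  have hu : ∀ k l, U 0 k * star (U 0 l) + U 1 k * star (U 1 l) =
      (1 : Matrix (Fin 2) (Fin 2) ℂ) l k := by
    intro k l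
    rw [← hU2, Matrix.mul_apply, Fin.sum_univ_two, Matrix.conjTranspose_apply,
      Matrix.conjTranspose_apply]
    ring
  have hsum : blk ((U ⊗ₖ B) * ρ * (U ⊗ₖ B)ᴴ) 0 0 + blk ((U ⊗ₖ B) * ρ * (U ⊗ₖ B)ᴴ) 1 1 = 1 := by
    rw [← hB, blk_conj, blk_conj, Matrix.mul_add, Matrix.add_mul, ← Finset.sum_add_distrib]
    simp_rw [← Finset.sum_add_distrib, ← add_smul, hu]
    simp [Fin.sum_univ_two]
  have htr : ∀ i, (blk ((U ⊗ₖ B) * ρ * (U ⊗ₖ B)ᴴ) i i).trace = (U * K * Uᴴ) i i := by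
    intro i
    have ht : ∀ k l, (B * blk ρ k l * Bᴴ).trace = K k l := by
      intro k l
      rw [hKb, hinv, Matrix.mul_assoc, Matrix.trace_mul_comm, Matrix.mul_assoc]
    rw [blk_conj]
    simp only [Matrix.trace_sum, Matrix.trace_smul, ht]
    simp only [Matrix.mul_apply, Fin.sum_univ_two, Matrix.conjTranspose_apply, smul_eq_mul]
    ring
  have hH : (U * K * Uᴴ).IsHermitian := Matrix.isHermitian_mul_mul_conjTranspose U hK
  have hre : ∀ i, (((U * K * Uᴴ) i i).re : ℂ) = (U * K * Uᴴ) i i := fun i =>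
    Complex.conj_eq_iff_re.mp (hH.apply i i)
  have hdU : U.det * Uᴴ.det = 1 := by rw [← Matrix.det_mul, hU1, Matrix.det_one]
  have hnU : ‖U.det‖ ^ 2 = 1 := by
    have := congrArg norm hdU
    rwa [Matrix.det_conjTranspose, norm_mul, norm_star, norm_one, ← sq] at this
  have hnB : ‖B.det‖ ^ 2 * ‖(blk ρ 0 0 + blk ρ 1 1).det‖ = 1 := by
    have := congrArg (fun M => ‖Matrix.det M‖) hB
    simp only [Matrix.det_mul, Matrix.det_conjTranspose, norm_mul, norm_star, Matrix.det_one,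
      norm_one] at this
    rw [← this]; ring
  have hc := canonical_bound _ (h.mul_mul_conjTranspose_same (U ⊗ₖ B)) hsum hB01 hB10
  rw [htr, htr, det_realign_conj] at hc
  have hR : ‖(realign ρ).det‖ = ‖(blk ρ 0 0 + blk ρ 1 1).det‖ ^ 2 *
      (‖U.det‖ ^ 4 * ‖B.det‖ ^ 4 * ‖(realign ρ).det‖) := by
    have : ‖(blk ρ 0 0 + blk ρ 1 1).det‖ ^ 2 *
      (‖U.det‖ ^ 4 * ‖B.det‖ ^ 4 * ‖(realign ρ).det‖) = (‖U.det‖ ^ 2) ^ 2 *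
      (‖B.det‖ ^ 2 * ‖(blk ρ 0 0 + blk ρ 1 1).det‖) ^ 2 * ‖(realign ρ).det‖ := by ring
    rw [this, hnU, hnB]; ring
  refine ⟨((U * K * Uᴴ) 0 0).re, ((U * K * Uᴴ) 1 1).re, ?_, ?_, ?_, ?_⟩
  · rw [hre, hre, ← Matrix.trace_fin_two, Matrix.trace_mul_comm, ← Matrix.mul_assoc, hU2,
      Matrix.one_mul]
  · have h1 : (U * K * Uᴴ).det = K.det := by
      rw [Matrix.det_mul, Matrix.det_mul]
      linear_combination K.det * hdU
    rw [hre, hre, ← h1, Matrix.det_fin_two (U * K * Uᴴ), h01, zero_mul, sub_zero]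
  · rw [hR]; exact mul_le_mul_of_nonneg_left hc.1 (by positivity)
  · rw [hR]; exact mul_le_mul_of_nonneg_left hc.2 (by positivity)

lemma det_marginal (ρ : Matrix (Fin 2 × Fin 2) (Fin 2 × Fin 2) ℂ) :
    4 * (blk ρ 0 0 + blk ρ 1 1).det = (ρ * (pauli 0 ⊗ₖ pauli 0)).trace ^ 2 -
      ((ρ * (pauli 0 ⊗ₖ pauli 1)).trace ^ 2 + (ρ * (pauli 0 ⊗ₖ pauli 2)).trace ^ 2 +
        (ρ * (pauli 0 ⊗ₖ pauli 3)).trace ^ 2) := by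
  simp [Matrix.trace, Matrix.mul_apply, Matrix.diag, Fintype.sum_prod_type, Fin.sum_univ_two,
    Matrix.kroneckerMap_apply, blk, Matrix.det_fin_two, pauli]
  ring_nf
  simp only [Complex.I_sq]
  ring

lemma trace_blk (ρ : Matrix (Fin 2 × Fin 2) (Fin 2 × Fin 2) ℂ)
    (θ : Fin 4 → Fin 4 → ℂ) (hθ : ∀ μ ν, θ μ ν = (ρ * (pauli μ ⊗ₖ pauli ν)).trace) (i j : Fin 2) :
    4 * (blk ρ i j * (blk ρ 0 0 + blk ρ 1 1).adjugate).trace =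
      (4 * (blk ρ 0 0 + blk ρ 1 1).det) * (1 : Matrix (Fin 2) (Fin 2) ℂ) i j +
      ∑ k : Fin 3, (θ k.succ 0 * θ 0 0 - ∑ l : Fin 3, θ k.succ l.succ * θ 0 l.succ) *
        pauli k.succ i j := by
  rw [det_marginal]
  simp only [Fin.sum_univ_three, hθ, Matrix.adjugate_fin_two]
  fin_cases i <;> fin_cases j <;>
  · simp [Matrix.trace, Matrix.mul_apply, Matrix.diag, Fintype.sum_prod_type, Fin.sum_univ_two,
      Matrix.kroneckerMap_apply, blk, pauli]
    ring_nf
    simp only [Complex.I_sq]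
    ring


/-- Physicality bound on steering-ellipsoid volume: for any two-qubit state,
`γ_b⁴ |det Θ(ρ)| ≤ (1 − ‖c_A‖)²`, i.e. `V_A ≤ (4π/3)(1 − ‖c_A‖)²`. -/
theorem stmt7 (ρ : Matrix (Fin 2 × Fin 2) (Fin 2 × Fin 2) ℂ)
    (hpsd : ρ.PosSemidef) (htr : ρ.trace = 1)
    (b : Fin 3 → ℝ) (hb : ∀ j, b j = Theta ρ 0 j.succ)
    (hb1 : norm3 b < 1)
    (γb : ℝ) (hγb : γb = 1 / Real.sqrt (1 - norm3 b ^ 2))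
    (cA : Fin 3 → ℝ)
    (hcA : ∀ i, cA i = γb ^ 2 * (Theta ρ i.succ 0 - ∑ j, Theta ρ i.succ j.succ * b j)) :
    γb ^ 4 * |(Theta ρ).det| ≤ (1 - norm3 cA) ^ 2 := by
  have hH := hpsd.isHermitian
  have hθ := theta_cast ρ hH
  have hp0 : pauli 0 = 1 := by
    ext i j; fin_cases i <;> fin_cases j <;> simp [pauli]
  have h00 : ((Theta ρ 0 0 : ℝ) : ℂ) = 1 := by
    rw [hθ, hp0, Matrix.one_kronecker_one, Matrix.mul_one, htr]
  have hn0 : 0 ≤ norm3 b := Real.sqrt_nonneg _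
  have hnb : norm3 b ^ 2 = b 0 ^ 2 + b 1 ^ 2 + b 2 ^ 2 := by
    rw [norm3, Real.sq_sqrt (by positivity), Fin.sum_univ_three]
  have hnc : norm3 cA ^ 2 = cA 0 ^ 2 + cA 1 ^ 2 + cA 2 ^ 2 := by
    rw [norm3, Real.sq_sqrt (by positivity), Fin.sum_univ_three]
  have hpos : 0 < 1 - norm3 b ^ 2 := by nlinarith
  have hγ2 : γb ^ 2 * (1 - norm3 b ^ 2) = 1 := by
    rw [hγb, div_pow, Real.sq_sqrt hpos.le]; field_simp
  have hdet : 4 * (blk ρ 0 0 + blk ρ 1 1).det = ((1 - norm3 b ^ 2 : ℝ) : ℂ) := by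
    rw [det_marginal, ← hθ, ← hθ, ← hθ, ← hθ, h00, hnb, hb, hb, hb]
    push_cast
    norm_num
  have hdet0 : (blk ρ 0 0 + blk ρ 1 1).det ≠ 0 := by
    intro h0
    rw [h0, mul_zero] at hdet
    exact hpos.ne (by exact_mod_cast hdet)
  have hγc : ((γb : ℂ)) ^ 2 * (4 * (blk ρ 0 0 + blk ρ 1 1).det) = 1 := by
    rw [hdet]; exact_mod_cast hγ2
  let K : Matrix (Fin 2) (Fin 2) ℂ := 1 + ∑ k : Fin 3, (cA k : ℂ) • pauli k.succ
  have hK : K.IsHermitian := by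
    unfold K Matrix.IsHermitian
    simp only [Matrix.conjTranspose_add, Matrix.conjTranspose_one, Matrix.conjTranspose_sum,
      Matrix.conjTranspose_smul, pauli_herm, Complex.star_def, Complex.conj_ofReal]
  have hKb : ∀ i j, K i j = (blk ρ i j * (blk ρ 0 0 + blk ρ 1 1)⁻¹).trace := by
    intro i j
    have ht := trace_blk ρ (fun μ ν => ((Theta ρ μ ν : ℝ) : ℂ)) hθ i j
    have hsum : (γb : ℂ) ^ 2 * (∑ k : Fin 3, (((Theta ρ k.succ 0 : ℝ) : ℂ) * ((Theta ρ 0 0 : ℝ) : ℂ)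
        - ∑ l : Fin 3, ((Theta ρ k.succ l.succ : ℝ) : ℂ) * ((Theta ρ 0 l.succ : ℝ) : ℂ)) *
        pauli k.succ i j) = ∑ k : Fin 3, (cA k : ℂ) * pauli k.succ i j := by
      rw [Finset.mul_sum]
      refine Finset.sum_congr rfl fun k _ => ?_
      rw [hcA, h00]
      simp only [← hb]
      push_cast
      ring
    have hinv : (blk ρ i j * (blk ρ 0 0 + blk ρ 1 1)⁻¹).trace =
        (γb : ℂ) ^ 2 * (4 * (blk ρ i j * (blk ρ 0 0 + blk ρ 1 1).adjugate).trace) := by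
      rw [Matrix.inv_def, Ring.inverse_eq_inv', Matrix.mul_smul, Matrix.trace_smul, smul_eq_mul]
      have : ((blk ρ 0 0 + blk ρ 1 1).det)⁻¹ = (γb : ℂ) ^ 2 * 4 := by
        exact inv_eq_of_mul_eq_one_left (by linear_combination hγc)
      rw [this]; ring
    rw [hinv, ht, mul_add, hsum, ← mul_assoc, hγc, one_mul]
    simp only [K, Matrix.add_apply, Matrix.sum_apply, Matrix.smul_apply, smul_eq_mul]
  obtain ⟨x, y, hxy, hxy2, hx, hy⟩ := general_bound ρ hpsd hdet0 K hK hKb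
  have htrK : K.trace = 2 := by
    simp [K, Matrix.trace_fin_two, Fin.sum_univ_three, pauli]
  have hdetK : K.det = ((1 - norm3 cA ^ 2 : ℝ) : ℂ) := by
    rw [hnc]
    simp [K, Matrix.det_fin_two, Fin.sum_univ_three, pauli]
    ring_nf
    simp only [Complex.I_sq]
    ring
  rw [htrK] at hxy
  rw [hdetK] at hxy2
  have hxy' : x + y = 2 := by exact_mod_cast hxy
  have hxy2' : x * y = 1 - norm3 cA ^ 2 := by exact_mod_cast hxy2
  have hnd : 4 * ‖(blk ρ 0 0 + blk ρ 1 1).det‖ = 1 - norm3 b ^ 2 := by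
    have := congrArg norm hdet
    rwa [norm_mul, Complex.norm_real, Real.norm_of_nonneg hpos.le, Complex.norm_ofNat] at this
  have hfin : ∀ z : ℝ, ‖(realign ρ).det‖ ≤ ‖(blk ρ 0 0 + blk ρ 1 1).det‖ ^ 2 * z ^ 2 →
      γb ^ 4 * |(Theta ρ).det| ≤ z ^ 2 := by
    intro z hz
    rw [det_theta ρ hH]
    calc γb ^ 4 * (16 * ‖(realign ρ).det‖)
        ≤ γb ^ 4 * (16 * (‖(blk ρ 0 0 + blk ρ 1 1).det‖ ^ 2 * z ^ 2)) := by gcongr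
      _ = (γb ^ 2 * (4 * ‖(blk ρ 0 0 + blk ρ 1 1).det‖)) ^ 2 * z ^ 2 := by ring
      _ = z ^ 2 := by rw [hnd, hγ2]; ring
  have hz : (x - (1 - norm3 cA)) * (y - (1 - norm3 cA)) = 0 := by
    linear_combination hxy2' - (1 - norm3 cA) * hxy'
  rcases mul_eq_zero.mp hz with h | h
  · rw [← sub_eq_zero.mp h]; exact hfin x hx
  · rw [← sub_eq_zero.mp h]; exact hfin y hy
end
end

section
/- Let ρ be a 4×4 positive semidefinite complex matrix of unit trace (a two-qubit state) with ‖b‖ < 1, and suppose ρ is separable. Then γ_b⁴ |det Θ(ρ)| ≤ (1/54)(1 − 9‖c_A‖² + (1 + 3‖c_A‖²)^{3/2}); equivalently, the steering-ellipsoid volume satisfies V_A ≤ (2π/81)(1 − 9‖c_A‖² + (1 + 3‖c_A‖²)^{3/2}). In particular any physical state whose ellipsoid volume exceeds this bound is entangled. -/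
open Matrix Kronecker Polynomial
open scoped ComplexOrder

noncomputable section

/-- A two-qubit matrix is separable if it is a finite convex-type combination
`Σₖ pₖ Aₖ ⊗ Bₖ` with `pₖ ≥ 0` and `Aₖ`, `Bₖ` positive semidefinite 2×2 matrices
of unit trace. -/
def SepState (ρ : Matrix (Fin 2 × Fin 2) (Fin 2 × Fin 2) ℂ) : Prop :=
  ∃ (n : ℕ) (p : Fin n → ℝ) (A B : Fin n → Matrix (Fin 2) (Fin 2) ℂ),
    (∀ k, 0 ≤ p k) ∧
    (∀ k, (A k).PosSemidef ∧ (A k).trace = 1) ∧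
    (∀ k, (B k).PosSemidef ∧ (B k).trace = 1) ∧
    ρ = ∑ k, (p k : ℂ) • (A k ⊗ₖ B k)

theorem polar (X : Matrix (Fin 3) (Fin 3) ℝ) (hX : X.det ≠ 0) :
    ∃ S O : Matrix (Fin 3) (Fin 3) ℝ, S.PosSemidef ∧ O * Oᵀ = 1 ∧ X * Oᵀ = S ∧ |X.det| = S.det := by
  open scoped MatrixOrder in
  have hp : (X * Xᵀ).PosSemidef := by
    simpa using Matrix.posSemidef_self_mul_conjTranspose X
  have h0 : (0 : Matrix (Fin 3) (Fin 3) ℝ) ≤ X * Xᵀ := Matrix.nonneg_iff_posSemidef.2 hp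
  obtain ⟨S, hS, hSS⟩ : ∃ S : Matrix (Fin 3) (Fin 3) ℝ, S.PosSemidef ∧ S * S = X * Xᵀ :=
    ⟨CFC.sqrt (X * Xᵀ), Matrix.nonneg_iff_posSemidef.1 (CFC.sqrt_nonneg _), CFC.sqrt_mul_sqrt_self _ h0⟩
  have hd : S.det * S.det = X.det * X.det := by
    have := congrArg Matrix.det hSS
    simpa using this
  have hS0 : S.det ≠ 0 := by
    intro h; rw [h] at hd; apply hX; simpa using hd.symm
  have hu : IsUnit S.det := isUnit_iff_ne_zero.2 hS0
  have hT : Sᵀ = S := by simpa [Matrix.IsHermitian] using hS.1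
  refine ⟨S, S⁻¹ * X, hS, ?_, ?_, ?_⟩
  · rw [Matrix.transpose_mul, Matrix.transpose_nonsing_inv, hT, Matrix.mul_assoc, ← Matrix.mul_assoc X, ← hSS]
    rw [Matrix.mul_assoc S, Matrix.mul_nonsing_inv _ hu, Matrix.mul_one, Matrix.nonsing_inv_mul _ hu]
  · rw [Matrix.transpose_mul, Matrix.transpose_nonsing_inv, hT, ← Matrix.mul_assoc, ← hSS,
      Matrix.mul_assoc S, Matrix.mul_nonsing_inv _ hu, Matrix.mul_one]
  · have h1 : 0 ≤ S.det := hS.det_nonneg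
    rw [← abs_of_nonneg h1]
    exact ((sq_eq_sq_iff_abs_eq_abs _ _).1 (by nlinarith))

theorem amgm (a b c : ℝ) (ha : 0 ≤ a) (hb : 0 ≤ b) (hc : 0 ≤ c) : 27 * (a * b * c) ≤ (a+b+c)^3 := by
  nlinarith [mul_nonneg ha (sq_nonneg (b-c)), mul_nonneg hb (sq_nonneg (a-c)), mul_nonneg hc (sq_nonneg (a-b)),
    mul_nonneg ha (sq_nonneg (a-c)), mul_nonneg ha (sq_nonneg (a-b)), mul_nonneg hb (sq_nonneg (b-a)), mul_nonneg hb (sq_nonneg (b-c)),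
    mul_nonneg hc (sq_nonneg (c-a)), mul_nonneg hc (sq_nonneg (c-b)), mul_nonneg (add_nonneg (add_nonneg ha hb) hc) (sq_nonneg (a-b)), mul_nonneg (add_nonneg (add_nonneg ha hb) hc) (sq_nonneg (a-c)), mul_nonneg (add_nonneg (add_nonneg ha hb) hc) (sq_nonneg (c-b))]

theorem det_le_trace (S : Matrix (Fin 3) (Fin 3) ℝ) (hS : S.PosSemidef) : 27 * S.det ≤ S.trace ^ 3 := by
  have h1 := hS.1.det_eq_prod_eigenvalues
  have h2 := hS.1.trace_eq_sum_eigenvalues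
  simp only [Fin.prod_univ_three, Fin.sum_univ_three, RCLike.ofReal_real_eq_id, id] at h1 h2
  rw [h1, h2]
  exact amgm _ _ _ (hS.eigenvalues_nonneg _) (hS.eigenvalues_nonneg _) (hS.eigenvalues_nonneg _)

theorem cs3 (u v : Fin 3 → ℝ) (r w : ℝ) (hr : 0 ≤ r) (hw : 0 ≤ w)
    (hu : u ⬝ᵥ u ≤ r^2) (hv : v ⬝ᵥ v ≤ w^2) : u ⬝ᵥ v ≤ r * w := by
  refine abs_le_of_sq_le_sq' ?_ (mul_nonneg hr hw) |>.2
  have h := Finset.sum_mul_sq_le_sq_mul_sq Finset.univ u v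
  have hu0 : 0 ≤ u ⬝ᵥ u := by simp [dotProduct, Fin.sum_univ_three]; nlinarith [sq_nonneg (u 0), sq_nonneg (u 1), sq_nonneg (u 2)]
  have hv0 : 0 ≤ v ⬝ᵥ v := by simp [dotProduct, Fin.sum_univ_three]; nlinarith [sq_nonneg (v 0), sq_nonneg (v 1), sq_nonneg (v 2)]
  simp only [dotProduct, pow_two] at *
  calc _ ≤ _ := h
    _ ≤ (r*r)*(w*w) := by gcongr
    _ = _ := by ring

theorem nuc {n : ℕ} (ξ η : Fin n → Fin 3 → ℝ) (r w : Fin n → ℝ) (hr : ∀ k, 0 ≤ r k) (hw : ∀ k, 0 ≤ w k)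
    (hξ : ∀ k, ξ k ⬝ᵥ ξ k ≤ r k ^ 2) (hη : ∀ k, η k ⬝ᵥ η k ≤ w k ^ 2) :
    27 * |(∑ k, vecMulVec (ξ k) (η k)).det| ≤ (∑ k, r k * w k)^3 := by
  set X := ∑ k, vecMulVec (ξ k) (η k) with hXdef
  by_cases hX : X.det = 0
  · rw [hX]; simp only [abs_zero, mul_zero]
    exact pow_nonneg (Finset.sum_nonneg fun k _ => mul_nonneg (hr k) (hw k)) 3
  obtain ⟨S, O, hS, hO, hXO, hd⟩ := polar X hX
  rw [hd]
  refine (det_le_trace S hS).trans ?_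
  have h0 : 0 ≤ S.trace := hS.trace_nonneg
  have : S.trace ≤ ∑ k, r k * w k := by
    rw [← hXO, hXdef, Finset.sum_mul, Matrix.trace_sum]
    refine Finset.sum_le_sum fun k _ => ?_
    rw [Matrix.vecMulVec_mul, Matrix.trace_vecMulVec, Matrix.vecMul_transpose]
    refine cs3 _ _ _ _ (hr k) (hw k) (hξ k) ?_
    have hO' : Oᵀ * O = 1 := mul_eq_one_comm.1 hO
    rw [Matrix.dotProduct_mulVec, ← Matrix.mulVec_transpose, Matrix.mulVec_mulVec, hO', Matrix.one_mulVec]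
    exact hη k
  gcongr

/-- determinant of a rank-one perturbation -/
theorem det_rank_one (m k : ℝ) (d : Fin 3 → ℝ) :
    (m • (1 : Matrix (Fin 3) (Fin 3) ℝ) + k • vecMulVec d d).det = m^3 + m^2 * k * (d ⬝ᵥ d) := by
  simp [Matrix.det_fin_three, vecMulVec_apply, dotProduct, Fin.sum_univ_three, Matrix.one_apply]
  ring

theorem mulVec_rank_one (m k : ℝ) (d x : Fin 3 → ℝ) :
    (m • (1 : Matrix (Fin 3) (Fin 3) ℝ) + k • vecMulVec d d) *ᵥ x = m • x + (k * (d ⬝ᵥ x)) • d := by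
  ext i
  simp [Matrix.add_mulVec, Matrix.smul_mulVec, Matrix.vecMulVec_mulVec]
  ring

theorem dot_self_nonneg (v : Fin 3 → ℝ) : 0 ≤ v ⬝ᵥ v := by
  simp only [dotProduct]
  exact Finset.sum_nonneg fun i _ => mul_self_nonneg _

theorem boosted {n : ℕ} (α y : Fin n → Fin 3 → ℝ) (w : Fin n → ℝ) (hw : ∀ k, 0 ≤ w k)
    (hα : ∀ k, α k ⬝ᵥ α k ≤ 1) (hy : ∀ k, y k ⬝ᵥ y k ≤ w k ^ 2)
    (hw1 : ∑ k, w k = 1) (hy0 : ∑ k, y k = 0) (d : Fin 3 → ℝ) (hd : d ⬝ᵥ d < 1) :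
    27 * ((1 - d ⬝ᵥ d) * |(∑ k, vecMulVec (α k) (y k)).det|) ≤ (1 + d ⬝ᵥ (∑ k, w k • α k))^3 := by
  obtain ⟨m, hm0, hm⟩ : ∃ m : ℝ, 0 < m ∧ m^2 = 1 - d ⬝ᵥ d :=
    ⟨Real.sqrt (1 - d ⬝ᵥ d), Real.sqrt_pos.2 (by linarith), Real.sq_sqrt (by linarith)⟩
  obtain ⟨q, hq⟩ : ∃ q : ℝ, q * (1 + m) = 1 := ⟨1/(1+m), by field_simp⟩
  set M : Matrix (Fin 3) (Fin 3) ℝ := m • 1 + q • vecMulVec d d with hM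
  have hdet : M.det = 1 - d ⬝ᵥ d := by
    rw [hM, det_rank_one]
    have : d ⬝ᵥ d = 1 - m^2 := by linarith
    rw [this]
    linear_combination m^2 * (1-m) * hq
  have key := nuc (fun k => M *ᵥ α k + d) y (fun k => 1 + d ⬝ᵥ α k) w ?_ hw ?_ hy
  · have e1 : ∑ k, vecMulVec (M *ᵥ α k + d) (y k) = M * ∑ k, vecMulVec (α k) (y k) := by
      rw [Finset.mul_sum]
      simp only [Matrix.mul_vecMulVec, Matrix.add_vecMulVec, Finset.sum_add_distrib]
      have : ∑ k, vecMulVec d (y k) = vecMulVec d (∑ k, y k) := by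
        ext i j; simp [vecMulVec_apply, Matrix.sum_apply, Finset.mul_sum]
      rw [this, hy0]; simp
    have e2 : ∑ k, (1 + d ⬝ᵥ α k) * w k = 1 + d ⬝ᵥ (∑ k, w k • α k) := by
      simp only [add_mul, one_mul, Finset.sum_add_distrib, hw1, dotProduct_sum, dotProduct_smul, smul_eq_mul]
      simp only [mul_comm]
    rw [e1, e2, Matrix.det_mul, hdet, abs_mul, abs_of_pos (by linarith)] at key
    exact key
  · intro k
    have := cs3 (-d) (α k) 1 1 (by norm_num) (by norm_num) (by simpa using hd.le) (by simpa using hα k)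
    simp at this
    show 0 ≤ 1 + d ⬝ᵥ α k
    linarith
  · intro k
    simp only [hM, mulVec_rank_one]
    have h1 := hα k
    have e : (m • α k + (q * (d ⬝ᵥ α k)) • d + d) ⬝ᵥ (m • α k + (q * (d ⬝ᵥ α k)) • d + d)
      = m^2 * (α k ⬝ᵥ α k) + (d ⬝ᵥ α k)^2 * (2 * m * q + q^2 * (d ⬝ᵥ d)) + 2 * (d ⬝ᵥ α k) * (m + q * (d ⬝ᵥ d)) + d ⬝ᵥ d := by
      simp only [dotProduct_add, add_dotProduct, dotProduct_smul, smul_dotProduct, smul_eq_mul, dotProduct_comm (α k) d]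
      ring
    have : d ⬝ᵥ d = 1 - m^2 := by linarith
    have f1 : m + q * (d ⬝ᵥ d) = 1 := by rw [this]; linear_combination (1-m) * hq
    have f2 : 2 * m * q + q^2 * (d ⬝ᵥ d) = 1 := by
      rw [this]; linear_combination (q * (1-m) + 1) * hq
    rw [e, f1, f2, this]
    nlinarith [mul_nonneg (sq_nonneg m) (sub_nonneg.2 h1)]

theorem final_bound (D : ℝ) (hD : 0 ≤ D) (c : Fin 3 → ℝ) (hc : c ⬝ᵥ c ≤ 1)
    (h : ∀ d : Fin 3 → ℝ, d ⬝ᵥ d < 1 → 27 * ((1 - d ⬝ᵥ d) * D) ≤ (1 + d ⬝ᵥ c)^3) :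
    D ≤ (1 / 54) * (1 - 9 * (c ⬝ᵥ c) + (1 + 3 * (c ⬝ᵥ c)) * Real.sqrt (1 + 3 * (c ⬝ᵥ c))) := by
  have h0 := dot_self_nonneg c
  have hh : ∀ t : ℝ, t^2 * (c ⬝ᵥ c) < 1 → 27 * ((1 - t^2 * (c ⬝ᵥ c)) * D) ≤ (1 - t * (c ⬝ᵥ c))^3 := by
    intro t ht
    have := h (-t • c) (by simp; nlinarith)
    simp only [dotProduct_smul, smul_dotProduct, smul_eq_mul] at this
    convert this using 2 <;> ring
  generalize c ⬝ᵥ c = C at *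
  obtain ⟨s, hs0, hs⟩ : ∃ s : ℝ, 0 ≤ s ∧ s^2 = 1 + 3 * C :=
    ⟨Real.sqrt (1 + 3 * C), Real.sqrt_nonneg _, Real.sq_sqrt (by linarith)⟩
  have hs1 : 1 ≤ s := by nlinarith
  have : Real.sqrt (1 + 3 * C) = s := by rw [← hs]; exact Real.sqrt_sq hs0
  rw [this]
  have hC : C = (s^2 - 1)/3 := by linarith
  rcases hc.lt_or_eq with hc | hc
  · have hs2 : s < 2 := by nlinarith
    have e1 : (3/(1+s))^2 * C = 1 - 2 * (2 - s)/(1+s) := by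
      rw [hC]; field_simp; ring
    have e2 : 1 - (3/(1+s)) * C = 2 - s := by
      rw [hC]; field_simp; ring
    have hpos : 0 < 2 * (2 - s)/(1+s) := by
      apply div_pos <;> linarith
    have := hh (3/(1+s)) (by rw [e1]; linarith)
    rw [e1, e2] at this
    have h3 : 54 * ((2 - s) * D) ≤ (2-s)^3 * (1+s) := by
      have h4 := mul_le_mul_of_nonneg_right this (by linarith : 0 ≤ 1 + s)
      refine le_trans (le_of_eq ?_) h4
      field_simp; ring
    have h5 : 54 * D ≤ (2-s)^2 * (1+s) := by
      have : (2 - s) * (54 * D) ≤ (2-s) * ((2-s)^2 * (1+s)) := by linarith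
      exact le_of_mul_le_mul_left this (by linarith)
    rw [hC]; linarith
  · subst hc
    have hs2 : s = 2 := by nlinarith
    subst hs2
    have h1 := hh 0 (by norm_num)
    norm_num
    by_contra hD'
    push Not at hD'
    have h2 := hh (1 - D) (by nlinarith)
    have h3 : D * (27 * (2 - D) * D) ≤ D * (D^2) := by linarith
    have := le_of_mul_le_mul_left h3 hD'
    nlinarith

def blo (A : Matrix (Fin 2) (Fin 2) ℂ) (μ : Fin 4) : ℝ := ((A * pauli μ).trace).re

theorem blo_zero (A : Matrix (Fin 2) (Fin 2) ℂ) (h : A.trace = 1) : blo A 0 = 1 := by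
  have : pauli 0 = 1 := by ext i j; fin_cases i <;> fin_cases j <;> simp [pauli]
  simp [blo, this, h]

theorem herm_entries (A : Matrix (Fin 2) (Fin 2) ℂ) (h : A.PosSemidef) :
    (A 0 0).im = 0 ∧ (A 1 1).im = 0 ∧ (A 1 0).re = (A 0 1).re ∧ (A 1 0).im = -(A 0 1).im := by
  have h1 := h.1
  have e00 := congrArg Complex.im (h1.apply 0 0)
  have e11 := congrArg Complex.im (h1.apply 1 1)
  have e10 := h1.apply 1 0
  have e10r := congrArg Complex.re e10
  have e10i := congrArg Complex.im e10
  simp at e00 e11 e10r e10i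
  refine ⟨by linarith, by linarith, by linarith, by linarith⟩

theorem blo_im (A : Matrix (Fin 2) (Fin 2) ℂ) (h : A.PosSemidef) (μ : Fin 4) :
    ((A * pauli μ).trace).im = 0 := by
  obtain ⟨h1, h2, h3, h4⟩ := herm_entries A h
  fin_cases μ <;> simp [pauli, Matrix.trace, Matrix.mul_apply, Fin.sum_univ_two, h1, h2, h3, h4]

theorem blo_norm (A : Matrix (Fin 2) (Fin 2) ℂ) (h : A.PosSemidef) (ht : A.trace = 1) :
    (fun i : Fin 3 => blo A i.succ) ⬝ᵥ (fun i : Fin 3 => blo A i.succ) ≤ 1 := by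
  obtain ⟨h1, h2, h3, h4⟩ := herm_entries A h
  have hd := (Complex.le_def.1 h.det_nonneg).1
  have ht' := congrArg Complex.re ht
  simp [Matrix.det_fin_two, Matrix.trace, Fin.sum_univ_two, h1, h2, h3, h4] at hd ht'
  simp [dotProduct, Fin.sum_univ_three, blo, pauli, Matrix.trace, Matrix.mul_apply, Fin.sum_univ_two, h1, h2, h3, h4]
  have : (A 1 1).re = 1 - (A 0 0).re := by linarith
  rw [this] at hd ⊢
  nlinarith

theorem theta_sep {n : ℕ} (p : Fin n → ℝ) (A B : Fin n → Matrix (Fin 2) (Fin 2) ℂ)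
    (hA : ∀ k, (A k).PosSemidef) (hB : ∀ k, (B k).PosSemidef) (μ ν : Fin 4) :
    Theta (∑ k, (p k : ℂ) • (A k ⊗ₖ B k)) μ ν = ∑ k, p k * (blo (A k) μ * blo (B k) ν) := by
  simp only [Theta, Matrix.of_apply, Finset.sum_mul, Matrix.trace_sum, Complex.re_sum]
  refine Finset.sum_congr rfl fun k _ => ?_
  rw [Matrix.smul_mul, ← Matrix.mul_kronecker_mul, Matrix.trace_smul, Matrix.trace_kronecker]
  simp [blo, blo_im _ (hA k), blo_im _ (hB k)]

theorem det_schur (Θ : Matrix (Fin 4) (Fin 4) ℝ) (h : Θ 0 0 = 1) :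
    Θ.det = (Matrix.of fun i j : Fin 3 => Θ i.succ j.succ - Θ i.succ 0 * Θ 0 j.succ).det := by
  rw [Matrix.det_succ_row_zero]
  simp [Fin.sum_univ_four, Matrix.det_fin_three, Fin.succAbove, h]
  ring

theorem core {n : ℕ} (p : Fin n → ℝ) (α β : Fin n → Fin 3 → ℝ) (hp : ∀ k, 0 ≤ p k)
    (hp1 : ∑ k, p k = 1) (hα : ∀ k, α k ⬝ᵥ α k ≤ 1) (hβ : ∀ k, β k ⬝ᵥ β k ≤ 1)
    (b c : Fin 3 → ℝ) (hb : b = ∑ k, p k • β k) (hb1 : b ⬝ᵥ b < 1) (γ : ℝ) (hγ0 : 0 < γ)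
    (hγ : γ^2 * (1 - b ⬝ᵥ b) = 1)
    (hc : c = γ^2 • ∑ k, (p k * (1 - b ⬝ᵥ β k)) • α k) :
    γ^4 * |(∑ k, p k • vecMulVec (α k) (β k - b)).det| ≤
      (1 / 54) * (1 - 9 * (c ⬝ᵥ c) + (1 + 3 * (c ⬝ᵥ c)) * Real.sqrt (1 + 3 * (c ⬝ᵥ c))) := by
  obtain ⟨q, hq⟩ : ∃ q : ℝ, q * (γ + 1) = γ^2 := ⟨γ^2/(γ+1), by field_simp⟩
  set G : Matrix (Fin 3) (Fin 3) ℝ := (1:ℝ) • 1 + q • vecMulVec b b with hG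
  have hbb : γ^2 * (b ⬝ᵥ b) = γ^2 - 1 := by linarith
  have hqb : q * (b ⬝ᵥ b) = γ - 1 := by
    have : (γ + 1) * (q * (b ⬝ᵥ b)) = (γ + 1) * (γ - 1) := by
      linear_combination (b ⬝ᵥ b) * hq + hbb
    exact mul_left_cancel₀ (by linarith) this
  have hGd : G.det = γ := by
    rw [hG, det_rank_one]; linarith
  have hGT : Gᵀ = G := by
    rw [hG]; simp [Matrix.transpose_vecMulVec]
  have hbβ : ∀ k, 0 ≤ 1 - b ⬝ᵥ β k := fun k => by
    have := cs3 b (β k) 1 1 (by norm_num) (by norm_num) (by simpa using hb1.le) (by simpa using hβ k)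
    linarith
  let y : Fin n → Fin 3 → ℝ := fun k => (p k * γ) • (G *ᵥ (β k - b))
  let w : Fin n → ℝ := fun k => γ^2 * (p k * (1 - b ⬝ᵥ β k))
  have hw : ∀ k, 0 ≤ w k := fun k => mul_nonneg (sq_nonneg _) (mul_nonneg (hp k) (hbβ k))
  have hsb : ∑ k, p k * (b ⬝ᵥ β k) = b ⬝ᵥ b := by
    conv_rhs => rw [hb, dotProduct_sum, ← hb]
    simp
  have hw1 : ∑ k, w k = 1 := by
    simp only [w, ← Finset.mul_sum, mul_sub, mul_one, Finset.sum_sub_distrib, hp1, hsb]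
    linarith
  have hy0 : ∑ k, y k = 0 := by
    have : ∑ k, y k = γ • (G *ᵥ (∑ k, p k • (β k - b))) := by
      rw [Matrix.mulVec_sum, Finset.smul_sum]
      refine Finset.sum_congr rfl fun k _ => ?_
      simp only [y, Matrix.mulVec_smul, smul_smul, mul_comm]
    rw [this]
    simp only [smul_sub, Finset.sum_sub_distrib, ← Finset.sum_smul, hp1, ← hb]
    simp
  have hy : ∀ k, y k ⬝ᵥ y k ≤ w k ^ 2 := by
    intro k
    simp only [y, w, hG, mulVec_rank_one]
    have h1 := hβ k
    have e : ((p k * γ) • ((1:ℝ) • (β k - b) + (q * (b ⬝ᵥ (β k - b))) • b)) ⬝ᵥ ((p k * γ) • ((1:ℝ) • (β k - b) + (q * (b ⬝ᵥ (β k - b))) • b))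
      = (p k * γ)^2 * (β k ⬝ᵥ β k - 2 * (b ⬝ᵥ β k) + b ⬝ᵥ b + (b ⬝ᵥ β k - b ⬝ᵥ b)^2 * (2 * q + q * (q * (b ⬝ᵥ b)))) := by
      simp only [dotProduct_add, add_dotProduct, dotProduct_smul, smul_dotProduct, smul_eq_mul, dotProduct_comm (β k) b,
        dotProduct_sub, sub_dotProduct]
      ring
    have f : 2 * q + q * (q * (b ⬝ᵥ b)) = γ^2 := by rw [hqb]; linarith
    rw [e, f]
    have g : (γ ^ 2 * (p k * (1 - b ⬝ᵥ β k)))^2 - (p k * γ)^2 * (β k ⬝ᵥ β k - 2 * (b ⬝ᵥ β k) + b ⬝ᵥ b + (b ⬝ᵥ β k - b ⬝ᵥ b)^2 * γ^2)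
       = (p k * γ)^2 * (1 - β k ⬝ᵥ β k) := by
      linear_combination (p k * γ)^2 * (1 - 2 * (b ⬝ᵥ β k) + b ⬝ᵥ b) * hγ
    nlinarith [mul_nonneg (sq_nonneg (p k * γ)) (sub_nonneg.2 h1)]
  have hcw : c = ∑ k, w k • α k := by
    rw [hc, Finset.smul_sum]
    simp only [smul_smul, w]
  have hT : ∑ k, vecMulVec (α k) (y k) = γ • ((∑ k, p k • vecMulVec (α k) (β k - b)) * G) := by
    rw [Finset.sum_mul, Finset.smul_sum]
    refine Finset.sum_congr rfl fun k _ => ?_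
    rw [Matrix.smul_mul, Matrix.vecMulVec_mul, ← Matrix.mulVec_transpose, hGT, smul_smul]
    simp only [y, Matrix.vecMulVec_smul, mul_comm]
  have hdet : |(∑ k, vecMulVec (α k) (y k)).det| = γ^4 * |(∑ k, p k • vecMulVec (α k) (β k - b)).det| := by
    rw [hT, Matrix.det_smul, Matrix.det_mul, hGd, abs_mul, abs_mul, abs_of_pos hγ0,
      abs_of_nonneg (by positivity)]
    simp only [Fintype.card_fin]; ring
  rw [← hdet]
  refine final_bound _ (abs_nonneg _) c ?_ ?_
  · have h1 : c ⬝ᵥ c = ∑ k, w k * (c ⬝ᵥ α k) := by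
      conv_lhs => rw [hcw, dotProduct_sum, ← hcw]
      simp
    by_contra hcon
    push Not at hcon
    set r := Real.sqrt (c ⬝ᵥ c) with hr
    have hr2 : r^2 = c ⬝ᵥ c := Real.sq_sqrt (by linarith)
    have hr0 : 0 ≤ r := Real.sqrt_nonneg _
    have h2 : c ⬝ᵥ c ≤ ∑ k, w k * r := by
      conv_lhs => rw [h1]
      refine Finset.sum_le_sum fun k _ => mul_le_mul_of_nonneg_left ?_ (hw k)
      have := cs3 c (α k) r 1 hr0 (by norm_num) hr2.ge (by simpa using hα k)
      linarith
    rw [← Finset.sum_mul, hw1, one_mul] at h2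
    nlinarith
  · intro d hd
    rw [hcw]
    exact boosted α y w hw hα hy hw1 hy0 d hd

/-- Separability bound on steering-ellipsoid volume: for any separable two-qubit state,
`γ_b⁴ |det Θ(ρ)| ≤ (1/54)(1 − 9‖c_A‖² + (1 + 3‖c_A‖²)^{3/2})`. -/
theorem stmt8 (ρ : Matrix (Fin 2 × Fin 2) (Fin 2 × Fin 2) ℂ)
    (hpsd : ρ.PosSemidef) (htr : ρ.trace = 1) (hsep : SepState ρ)
    (b : Fin 3 → ℝ) (hb : ∀ j, b j = Theta ρ 0 j.succ)
    (hb1 : norm3 b < 1)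
    (γb : ℝ) (hγb : γb = 1 / Real.sqrt (1 - norm3 b ^ 2))
    (cA : Fin 3 → ℝ)
    (hcA : ∀ i, cA i = γb ^ 2 * (Theta ρ i.succ 0 - ∑ j, Theta ρ i.succ j.succ * b j)) :
    γb ^ 4 * |(Theta ρ).det| ≤
      (1 / 54) * (1 - 9 * norm3 cA ^ 2
        + (1 + 3 * norm3 cA ^ 2) * Real.sqrt (1 + 3 * norm3 cA ^ 2)) := by
  obtain ⟨n, p, A, B, hp, hA, hB, rfl⟩ := hsep
  have hΘ := theta_sep p A B (fun k => (hA k).1) (fun k => (hB k).1)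
  set ρ := ∑ k, (p k : ℂ) • (A k ⊗ₖ B k) with hρ
  have hA0 : ∀ k, blo (A k) 0 = 1 := fun k => blo_zero _ (hA k).2
  have hB0 : ∀ k, blo (B k) 0 = 1 := fun k => blo_zero _ (hB k).2
  have h00 : Theta ρ 0 0 = 1 := by
    have : pauli 0 = 1 := by ext i j; fin_cases i <;> fin_cases j <;> simp [pauli]
    simp [Theta, this, htr]
  have hp1 : ∑ k, p k = 1 := by
    rw [← h00, hΘ]; simp [hA0, hB0]
  have hn : ∀ v : Fin 3 → ℝ, norm3 v ^ 2 = v ⬝ᵥ v := by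
    intro v
    rw [norm3, Real.sq_sqrt (Finset.sum_nonneg fun i _ => sq_nonneg _)]
    simp [dotProduct, pow_two]
  have hb0 : 0 ≤ norm3 b := Real.sqrt_nonneg _
  have hbb : b ⬝ᵥ b < 1 := by rw [← hn]; nlinarith
  let α : Fin n → Fin 3 → ℝ := fun k i => blo (A k) i.succ
  let β : Fin n → Fin 3 → ℝ := fun k i => blo (B k) i.succ
  have hbs : b = ∑ k, p k • β k := by
    ext j
    rw [hb, hΘ]; simp [hA0, β]
  have hs : 0 < Real.sqrt (1 - b ⬝ᵥ b) := Real.sqrt_pos.2 (by linarith)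
  have hs2 : Real.sqrt (1 - b ⬝ᵥ b) ^ 2 = 1 - b ⬝ᵥ b := Real.sq_sqrt (by linarith)
  rw [hn] at hγb
  have hγ0 : 0 < γb := by rw [hγb]; positivity
  have hγ : γb ^ 2 * (1 - b ⬝ᵥ b) = 1 := by
    rw [← hs2, hγb]; field_simp
  have hc : cA = γb^2 • ∑ k, (p k * (1 - b ⬝ᵥ β k)) • α k := by
    ext i
    rw [hcA]
    simp only [Pi.smul_apply, Finset.sum_apply, smul_eq_mul, hΘ, hB0]
    congr 1
    simp only [Finset.sum_mul, dotProduct, α, β]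
    rw [Finset.sum_comm, ← Finset.sum_sub_distrib]
    refine Finset.sum_congr rfl fun k _ => ?_
    simp only [Fin.sum_univ_three]
    ring
  have hdet : (Theta ρ).det = (∑ k, p k • vecMulVec (α k) (β k - b)).det := by
    rw [det_schur _ h00]
    congr 1
    ext i j
    rw [Matrix.of_apply, ← hb, hΘ, hΘ]
    simp only [Matrix.sum_apply, Matrix.smul_apply, vecMulVec_apply, hB0, α, β, Finset.sum_mul, Pi.sub_apply, smul_eq_mul]
    rw [← Finset.sum_sub_distrib]
    refine Finset.sum_congr rfl fun k _ => ?_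
    ring
  rw [hdet, hn]
  exact core p α β hp hp1 (fun k => blo_norm _ (hA k).1 (hA k).2) (fun k => blo_norm _ (hB k).1 (hB k).2)
    b cA hbs hbb γb hγ0 hγ hc
end
end

section
/- Let 0 ≤ c ≤ 1, and set s₁ = √((1 − 3c² + √(1+3c²))/18) and s₃ = (2 − √(1+3c²))/3 (the semiaxes of the largest-volume separable oblate spheroid with centre (0,0,c), minor axis radial). Then both ρ̃((0,0,c),(s₁,s₁,s₃)) and ρ̃((0,0,c),(s₁,s₁,−s₃)) are positive semidefinite, and s₁²·s₃ = (1/54)(1 − 9c² + (1 + 3c²)^{3/2}), i.e. the spheroid's volume (4π/3)s₁²s₃ equals the separable volume bound (2π/81)(1 − 9c² + (1+3c²)^{3/2}). -/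
open Matrix Kronecker Polynomial
open scoped ComplexOrder

noncomputable section

/-- A real binary quadratic form with nonnegative diagonal and determinant is nonnegative. -/
theorem quad_nonneg_aux (a b s u v : ℝ) (ha : 0 ≤ a) (hb : 0 ≤ b) (h : 4 * s ^ 2 ≤ a * b) :
    0 ≤ a * u ^ 2 + b * v ^ 2 + 4 * s * (u * v) := by
  rcases ha.eq_or_lt with h0 | h0
  · have hs : s = 0 := by
      rw [← h0] at h
      nlinarith [sq_nonneg s]
    rw [hs]
    nlinarith [mul_nonneg ha (sq_nonneg u), mul_nonneg hb (sq_nonneg v)]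
  · have h1 : 0 ≤ a * (a * u ^ 2 + b * v ^ 2 + 4 * s * (u * v)) := by
      nlinarith [sq_nonneg (a * u + 2 * s * v), mul_nonneg (sub_nonneg.2 h) (sq_nonneg v)]
    exact nonneg_of_mul_nonneg_right h1 h0

theorem rhoTilde_posSemidef_aux (c s t : ℝ) (hp : 0 ≤ 1 + c + t) (hq : 0 ≤ 1 - c + t)
    (ha : 0 ≤ 1 + c - t) (hb : 0 ≤ 1 - c - t)
    (h : 4 * s ^ 2 ≤ (1 + c - t) * (1 - c - t)) :
    (rhoTilde ![0, 0, c] ![s, s, t]).PosSemidef := by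
  refine Matrix.PosSemidef.of_dotProduct_mulVec_nonneg ?_ ?_
  · ext ⟨i, j⟩ ⟨k, l⟩
    fin_cases i <;> fin_cases j <;> fin_cases k <;> fin_cases l <;>
      simp [rhoTilde, pauli, Fin.sum_univ_three, Fin.succ] <;> ring
  · intro x
    have h1 := quad_nonneg_aux _ _ s (x (0, 1)).re (x (1, 0)).re ha hb h
    have h2 := quad_nonneg_aux _ _ s (x (0, 1)).im (x (1, 0)).im ha hb h
    have h3 := mul_nonneg hp (add_nonneg (sq_nonneg (x (0, 0)).re) (sq_nonneg (x (0, 0)).im))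
    have h4 := mul_nonneg hq (add_nonneg (sq_nonneg (x (1, 1)).re) (sq_nonneg (x (1, 1)).im))
    rw [Complex.le_def]
    simp [rhoTilde, pauli, Fin.sum_univ_three, Matrix.one_apply, Fin.succ, Matrix.mulVec,
      dotProduct, Fintype.sum_prod_type]
    constructor
    · nlinarith
    · ring

/-- The largest-volume separable oblate spheroid with centre `(0,0,c)`: with
`s₁ = √((1 − 3c² + √(1+3c²))/18)` and `s₃ = (2 − √(1+3c²))/3`, both chiralities are
physical states and `s₁²s₃ = (1/54)(1 − 9c² + (1 + 3c²)^{3/2})`, so the spheroid's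
volume `(4π/3)s₁²s₃` equals the separable volume bound. -/
theorem stmt9 (c : ℝ) (hc0 : 0 ≤ c) (hc1 : c ≤ 1) :
    (rhoTilde ![0, 0, c]
        ![Real.sqrt ((1 - 3 * c ^ 2 + Real.sqrt (1 + 3 * c ^ 2)) / 18),
          Real.sqrt ((1 - 3 * c ^ 2 + Real.sqrt (1 + 3 * c ^ 2)) / 18),
          (2 - Real.sqrt (1 + 3 * c ^ 2)) / 3]).PosSemidef
    ∧ (rhoTilde ![0, 0, c]
        ![Real.sqrt ((1 - 3 * c ^ 2 + Real.sqrt (1 + 3 * c ^ 2)) / 18),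
          Real.sqrt ((1 - 3 * c ^ 2 + Real.sqrt (1 + 3 * c ^ 2)) / 18),
          -((2 - Real.sqrt (1 + 3 * c ^ 2)) / 3)]).PosSemidef
    ∧ Real.sqrt ((1 - 3 * c ^ 2 + Real.sqrt (1 + 3 * c ^ 2)) / 18) ^ 2
        * ((2 - Real.sqrt (1 + 3 * c ^ 2)) / 3)
      = (1 / 54) * (1 - 9 * c ^ 2
          + (1 + 3 * c ^ 2) * Real.sqrt (1 + 3 * c ^ 2)) := by
  have hr0 : 0 ≤ Real.sqrt (1 + 3 * c ^ 2) := Real.sqrt_nonneg _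
  have hr2 : Real.sqrt (1 + 3 * c ^ 2) ^ 2 = 1 + 3 * c ^ 2 := Real.sq_sqrt (by positivity)
  set r := Real.sqrt (1 + 3 * c ^ 2) with hr
  have hr1 : 1 ≤ r := by nlinarith
  have hr3 : r ≤ 2 := by nlinarith
  have hr4 : 2 * c ≤ r := by nlinarith
  have hs : Real.sqrt ((1 - 3 * c ^ 2 + r) / 18) ^ 2 = (1 - 3 * c ^ 2 + r) / 18 :=
    Real.sq_sqrt (by nlinarith)
  refine ⟨?_, ?_, ?_⟩
  · apply rhoTilde_posSemidef_aux <;> first | linarith | (rw [hs]; nlinarith)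
  · apply rhoTilde_posSemidef_aux <;> first | linarith | (rw [hs]; nlinarith)
  · rw [hs]
    linear_combination (-1 / 54) * hr2
end
end

section
/- Let t ∈ ℝ³ and let τ = ρ̃((0,0,0),t) be the corresponding Bell-diagonal operator. If τ is positive semidefinite, then its eigenvalues λ₁ ≥ λ₂ ≥ λ₃ ≥ λ₄ (real, since τ is Hermitian) satisfy λ₁ − λ₂ − λ₃ − λ₄ ≤ √|t₁t₂t₃|; for Bell-diagonal states max(0, λ₁−λ₂−λ₃−λ₄) is the concurrence, so C(τ) ≤ √|t₁t₂t₃|. Moreover, for every p₀ ∈ [0,1] the Bell-diagonal state with t = (p₀, p₀, −1) is positive semidefinite and saturates the bound: its eigenvalues satisfy λ₁ − λ₂ − λ₃ − λ₄ = p₀ = √|t₁t₂t₃|. -/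
open Matrix Kronecker Polynomial
open scoped ComplexOrder

noncomputable section

lemma rho_explicit (t : Fin 3 → ℝ) :
    Matrix.reindex finProdFinEquiv finProdFinEquiv (rhoTilde ![0, 0, 0] t) =
      (!![(1 + (t 2 : ℂ)) / 4, 0, 0, ((t 0 : ℂ) - t 1) / 4;
         0, (1 - (t 2 : ℂ)) / 4, ((t 0 : ℂ) + t 1) / 4, 0;
         0, ((t 0 : ℂ) + t 1) / 4, (1 - (t 2 : ℂ)) / 4, 0;
         ((t 0 : ℂ) - t 1) / 4, 0, 0, (1 + (t 2 : ℂ)) / 4] : Matrix (Fin 4) (Fin 4) ℂ) := by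
  ext i j
  have e0 : (finProdFinEquiv (m := 2) (n := 2)).symm 0 = (0, 0) := by decide
  have e1 : (finProdFinEquiv (m := 2) (n := 2)).symm 1 = (0, 1) := by decide
  have e2 : (finProdFinEquiv (m := 2) (n := 2)).symm 2 = (1, 0) := by decide
  have e3 : (finProdFinEquiv (m := 2) (n := 2)).symm 3 = (1, 1) := by decide
  have s2 : (Fin.succ 2 : Fin 4) = 3 := rfl
  have s1 : (Fin.succ 1 : Fin 4) = 2 := rfl
  have s0 : (Fin.succ 0 : Fin 4) = 1 := rfl
  rw [Matrix.reindex_apply, Matrix.submatrix_apply]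
  fin_cases i <;> fin_cases j <;>
    simp only [Fin.zero_eta, Fin.mk_one, Fin.reduceFinMk, e0, e1, e2, e3] <;>
    simp [rhoTilde, Fin.sum_univ_three, s0, s1, s2, pauli] <;> ring

lemma rho_charpoly (t : Fin 3 → ℝ) :
    (rhoTilde ![0, 0, 0] t).charpoly =
      (X - C (((1 + t 0 - t 1 + t 2) / 4 : ℝ) : ℂ)) * (X - C (((1 - t 0 + t 1 + t 2) / 4 : ℝ) : ℂ))
      * (X - C (((1 + t 0 + t 1 - t 2) / 4 : ℝ) : ℂ))
      * (X - C (((1 - t 0 - t 1 - t 2) / 4 : ℝ) : ℂ)) := by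
  rw [← Matrix.charpoly_reindex finProdFinEquiv, rho_explicit]
  have h1 : (((1 + t 0 - t 1 + t 2) / 4 : ℝ) : ℂ) =
    (1 + (t 2 : ℂ)) / 4 + ((t 0 : ℂ) - t 1) / 4 := by push_cast; ring
  have h2 : (((1 - t 0 + t 1 + t 2) / 4 : ℝ) : ℂ) =
    (1 + (t 2 : ℂ)) / 4 - ((t 0 : ℂ) - t 1) / 4 := by push_cast; ring
  have h3 : (((1 + t 0 + t 1 - t 2) / 4 : ℝ) : ℂ) =
    (1 - (t 2 : ℂ)) / 4 + ((t 0 : ℂ) + t 1) / 4 := by push_cast; ring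
  have h4 : (((1 - t 0 - t 1 - t 2) / 4 : ℝ) : ℂ) =
    (1 - (t 2 : ℂ)) / 4 - ((t 0 : ℂ) + t 1) / 4 := by push_cast; ring
  rw [h1, h2, h3, h4]
  generalize (1 + (t 2 : ℂ)) / 4 = a
  generalize (1 - (t 2 : ℂ)) / 4 = b
  generalize ((t 0 : ℂ) - t 1) / 4 = c
  generalize ((t 0 : ℂ) + t 1) / 4 = d
  rw [Matrix.charpoly]
  simp [Matrix.det_succ_row_zero, Fin.sum_univ_succ, Matrix.charmatrix_apply, Fin.succAbove,
    Matrix.diagonal_apply]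
  ring

lemma rho_nonneg (t : Fin 3 → ℝ) (h : (rhoTilde ![0, 0, 0] t).PosSemidef) :
    0 ≤ 1 + t 0 - t 1 + t 2 ∧ 0 ≤ 1 - t 0 + t 1 + t 2 ∧ 0 ≤ 1 + t 0 + t 1 - t 2 ∧
      0 ≤ 1 - t 0 - t 1 - t 2 := by
  have h' : (Matrix.reindex finProdFinEquiv finProdFinEquiv
      (rhoTilde ![0, 0, 0] t)).PosSemidef := by
    rw [Matrix.reindex_apply]; exact h.submatrix _
  rw [rho_explicit] at h'
  have k1 := h'.re_dotProduct_nonneg ![1, 0, 0, 1]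
  have k2 := h'.re_dotProduct_nonneg ![1, 0, 0, -1]
  have k3 := h'.re_dotProduct_nonneg ![0, 1, 1, 0]
  have k4 := h'.re_dotProduct_nonneg ![0, 1, -1, 0]
  simp [Matrix.mulVec, dotProduct, Fin.sum_univ_four] at k1 k2 k3 k4
  refine ⟨?_, ?_, ?_, ?_⟩ <;> linarith

lemma key_ineq (u v w x : ℝ) (hu : 0 ≤ u) (hv : 0 ≤ v) (hw : 0 ≤ w)
    (h : u + v + w + x = 1) : x ≤ Real.sqrt |(x + u) * (x + v) * (x + w)| := by
  rcases le_or_gt x 0 with hx | hx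
  · exact hx.trans (Real.sqrt_nonneg _)
  · apply Real.le_sqrt_of_sq_le
    refine le_trans ?_ (le_abs_self _)
    have e : (x + u) * (x + v) * (x + w) =
      x ^ 2 * (u + v + w + x) + x * (u * v + u * w + v * w) + u * v * w := by ring
    rw [e, h]
    have : 0 ≤ x * (u * v + u * w + v * w) + u * v * w := by positivity
    linarith

lemma rho_psd (p : ℝ) (h0 : 0 ≤ p) (h1 : p ≤ 1) :
    (rhoTilde ![0, 0, 0] ![p, p, -1]).PosSemidef := by
  have h' : (Matrix.reindex finProdFinEquiv finProdFinEquiv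
      (rhoTilde ![0, 0, 0] ![p, p, -1])).PosSemidef := by
    rw [rho_explicit]
    have a1 : (0 : ℂ) ≤ (((1 + p) / 4 : ℝ) : ℂ) := by
      rw [Complex.zero_le_real]; linarith
    have a2 : (0 : ℂ) ≤ (((1 - p) / 4 : ℝ) : ℂ) := by
      rw [Complex.zero_le_real]; linarith
    have := ((posSemidef_vecMulVec_self_star (![0, 1, 1, 0] : Fin 4 → ℂ)).smul a1).add
      ((posSemidef_vecMulVec_self_star (![0, 1, -1, 0] : Fin 4 → ℂ)).smul a2)
    convert this using 1
    ext i j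
    fin_cases i <;> fin_cases j <;> simp [Matrix.vecMulVec] <;> ring
  rw [Matrix.reindex_apply] at h'
  exact (Matrix.posSemidef_submatrix_equiv _).1 h'

/-- Concurrence bound for Bell-diagonal states: if `τ = ρ̃(0,t)` is positive
semidefinite then its eigenvalues in non-increasing order satisfy
`λ₁ − λ₂ − λ₃ − λ₄ ≤ √|t₁t₂t₃|` (the left side being the concurrence when positive);
moreover for every `p₀ ∈ [0,1]` the Bell-diagonal state with `t = (p₀,p₀,−1)` is
positive semidefinite and saturates the bound. -/
theorem stmt11 :
    (∀ t : Fin 3 → ℝ, (rhoTilde ![0, 0, 0] t).PosSemidef →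
      ∀ lam : Fin 4 → ℝ,
        lam 1 ≤ lam 0 → lam 2 ≤ lam 1 → lam 3 ≤ lam 2 →
        (rhoTilde ![0, 0, 0] t).charpoly = ∏ i : Fin 4, (X - C ((lam i : ℂ))) →
        lam 0 - lam 1 - lam 2 - lam 3 ≤ Real.sqrt |t 0 * t 1 * t 2|)
    ∧ (∀ p : ℝ, 0 ≤ p → p ≤ 1 →
        (rhoTilde ![0, 0, 0] ![p, p, -1]).PosSemidef ∧
        ∃ lam : Fin 4 → ℝ,
          lam 1 ≤ lam 0 ∧ lam 2 ≤ lam 1 ∧ lam 3 ≤ lam 2 ∧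
          (rhoTilde ![0, 0, 0] ![p, p, -1]).charpoly
            = ∏ i : Fin 4, (X - C ((lam i : ℂ))) ∧
          lam 0 - lam 1 - lam 2 - lam 3 = p ∧
          p = Real.sqrt |p * p * (-1 : ℝ)|) := by
  refine ⟨?_, ?_⟩
  · intro t hpsd lam h10 h21 h32 hc
    obtain ⟨n1, n2, n3, n4⟩ := rho_nonneg t hpsd
    rw [rho_charpoly, Fin.prod_univ_four] at hc
    have hsum : lam 0 + lam 1 + lam 2 + lam 3 = 1 := by
      have e (a b c d : ℂ) : ((X - C a) * (X - C b) * (X - C c) * (X - C d)).nextCoeff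
          = -a - b - c - d := by
        rw [Polynomial.Monic.nextCoeff_mul, Polynomial.Monic.nextCoeff_mul,
          Polynomial.Monic.nextCoeff_mul] <;>
          first | (simp; ring) | monicity!
      have := congrArg Polynomial.nextCoeff hc
      rw [e, e] at this
      norm_cast at this
      linarith
    have hr := congrArg (Polynomial.eval (lam 0 : ℂ)) hc
    simp only [Polynomial.eval_mul, Polynomial.eval_sub, Polynomial.eval_X, Polynomial.eval_C,
      sub_self, zero_mul, mul_eq_zero, sub_eq_zero, Complex.ofReal_inj] at hr
    have e : lam 0 - lam 1 - lam 2 - lam 3 = 2 * lam 0 - 1 := by linarith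
    rw [e]
    rcases hr with ((hr | hr) | hr) | hr
    · have := key_ineq ((1 - t 0 + t 1 + t 2) / 2) ((1 + t 0 + t 1 - t 2) / 2)
        ((1 - t 0 - t 1 - t 2) / 2) (2 * lam 0 - 1) (by linarith) (by linarith) (by linarith)
        (by linarith)
      rw [← abs_neg] at this
      convert this using 3
      rw [hr]; ring
    · have := key_ineq ((1 + t 0 - t 1 + t 2) / 2) ((1 + t 0 + t 1 - t 2) / 2)
        ((1 - t 0 - t 1 - t 2) / 2) (2 * lam 0 - 1) (by linarith) (by linarith) (by linarith)
        (by linarith)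
      rw [← abs_neg] at this
      convert this using 3
      rw [hr]; ring
    · have := key_ineq ((1 + t 0 - t 1 + t 2) / 2) ((1 - t 0 + t 1 + t 2) / 2)
        ((1 - t 0 - t 1 - t 2) / 2) (2 * lam 0 - 1) (by linarith) (by linarith) (by linarith)
        (by linarith)
      rw [← abs_neg] at this
      convert this using 3
      rw [hr]; ring
    · have := key_ineq ((1 + t 0 - t 1 + t 2) / 2) ((1 - t 0 + t 1 + t 2) / 2)
        ((1 + t 0 + t 1 - t 2) / 2) (2 * lam 0 - 1) (by linarith) (by linarith) (by linarith)
        (by linarith)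
      rw [← abs_neg] at this
      convert this using 3
      rw [hr]; ring
  · intro p h0 h1
    refine ⟨rho_psd p h0 h1, ![(1 + p) / 2, (1 - p) / 2, 0, 0], ?_, ?_, ?_, ?_, ?_, ?_⟩
    · simp; linarith
    · simp; linarith
    · simp
    · rw [rho_charpoly, Fin.prod_univ_four]
      simp
      ring_nf
    · simp; ring
    · rw [mul_neg_one, abs_neg, abs_mul_self, Real.sqrt_mul_self h0]
end
end
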